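/- Let Γ ⊂ PSL(3,ℂ) be a discrete group and let Ω ⊆ ℙ²_ℂ be either Eq(Γ), the Kulkarni discontinuity region Ω(Γ), or a maximal open set on which Γ acts properly discontinuously, with 4 ≤ LiG(Ω) < ∞. Let ℒ be a family of complex lines in general position contained in ℙ²_ℂ∖Ω with card(ℒ) = LiG(Ω). Then every complex line ℓ ⊂ ℙ²_ℂ that does not contain any vertex of ℒ has infinite orbit under Γ. -/

import Mathlib

/-!
Suppose that the orbit of `ℓ` is finite. A point lying on infinitely many lines of `ℙ²_ℂ ∖ Ω`
(`manyLines Ω`) is, by maximality of `L`, a crossing of two lines of `L`; so there are only finitely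
many such points, `Γ` permutes them, and each is a vertex, hence off `ℓ`. Only finitely many lines of
`ℙ²_ℂ ∖ Ω` avoid all of them (`finite_lines_avoiding`).

* If there are two such points, a subgroup of finite index fixes both of them and `ℓ`; in suitable
  coordinates its elements are the matrices `NB μ c` (`li_le_two_of_two_points`).
* Otherwise a subgroup of finite index fixes a point and two lines of `L` missing it, and its
  elements are the matrices `NA μ c` (`li_le_two_of_two_lines`).

Either way the subgroup is, up to reversing products, a discrete group of affine maps
`z ↦ μ z + c` of `ℂ`. By `affine_dichotomy` it consists of isometries and contains infinitely many
translations, or else has a common fixed point and can be diagonalised. In each case the normalised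
matrices stay in a compact set, and the singular ones among the limits have kernel and image inside
one fixed line, or in the union of a line and a point, all of whose points have infinite isotropy. It
follows that `ℙ²_ℂ ∖ Ω` is contained in that set, whichever of the three domains `Ω` is
(`compl_subset_of_dynamics`), and so contains at most two lines (`li_le_two`), contradicting
`4 ≤ LiG Ω`. A finite group `Γ` is excluded by `li_le_two_of_finite`.
-/

open scoped LinearAlgebra.Projectivization
open Projectivization Matrix Topology

noncomputable section

abbrev V3 : Type := Fin 3 → ℂ
abbrev SL3 := Matrix.SpecialLinearGroup (Fin 3) ℂ
abbrev PSL3 := SL3 ⧸ Subgroup.center SL3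
abbrev P2 := ℙ ℂ V3

instance : TopologicalSpace P2 := instTopologicalSpaceQuotient

/-- The action of `SL(3,ℂ)` on `ℙ²_ℂ`. -/
def smulP2 (A : SL3) : P2 → P2 :=
  Projectivization.map ((Matrix.SpecialLinearGroup.toLin' A : V3 ≃ₗ[ℂ] V3) : V3 →ₗ[ℂ] V3)
    (Matrix.SpecialLinearGroup.toLin' A).injective

lemma smulP2_mk (A : SL3) (v : V3) (hv : v ≠ 0) :
    smulP2 A (Projectivization.mk ℂ v hv) =
      Projectivization.mk ℂ (Matrix.SpecialLinearGroup.toLin' A v)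
        ((Matrix.SpecialLinearGroup.toLin' A).map_ne_zero_iff.mpr hv) := rfl

lemma smulP2_one : smulP2 (1 : SL3) = id := by
  funext x
  induction x using Projectivization.ind with
  | h v hv => simp [smulP2_mk]

lemma smulP2_mul (A B : SL3) : smulP2 (A * B) = smulP2 A ∘ smulP2 B := by
  funext x
  induction x using Projectivization.ind with
  | h v hv =>
    simp only [smulP2_mk, Function.comp_apply, _root_.map_mul]
    rfl

lemma continuous_smulP2 (A : SL3) : Continuous (smulP2 A) := by
  unfold smulP2 Projectivization.map
  exact Continuous.quotient_map'
    ((((Matrix.SpecialLinearGroup.toLin' A : V3 ≃ₗ[ℂ] V3) :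
        V3 →ₗ[ℂ] V3).continuous_of_finiteDimensional.comp
      continuous_subtype_val).subtype_mk _) _
lemma smulP2_center (A : SL3) (hA : A ∈ Subgroup.center SL3) : smulP2 A = id := by
  obtain ⟨r, hr3, hrA⟩ := Matrix.SpecialLinearGroup.mem_center_iff.mp hA
  have hr0 : r ≠ 0 := by
    intro h
    rw [h] at hr3
    simp at hr3
  funext x
  induction x using Projectivization.ind with
  | h v hv =>
    have hAv : Matrix.SpecialLinearGroup.toLin' A v = r • v := by
      rw [Matrix.SpecialLinearGroup.toLin'_apply]
      have : ((A : Matrix (Fin 3) (Fin 3) ℂ)) = Matrix.scalar (Fin 3) r := by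
        rw [← hrA]
      rw [this]
      funext i
      simp [Matrix.toLin'_apply, Matrix.scalar, Matrix.mulVec_diagonal]
  
    simp only [smulP2_mk, id_eq]
    rw [Projectivization.mk_eq_mk_iff]
    exact ⟨Units.mk0 r hr0, by simp [hAv]⟩

/-- The action of `SL(3,ℂ)` on `ℙ²` as a homomorphism into permutations. -/
def slPerm : SL3 →* Equiv.Perm P2 where
  toFun A :=
    { toFun := smulP2 A
      invFun := smulP2 A⁻¹
      left_inv := fun x => by
        have := (smulP2_mul A⁻¹ A).symm
        simp only [inv_mul_cancel, smulP2_one] at this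
        exact congrFun this x
      right_inv := fun x => by
        have := (smulP2_mul A A⁻¹).symm
        simp only [mul_inv_cancel, smulP2_one] at this
        exact congrFun this x }
  map_one' := by
    ext x
    simp [smulP2_one]
  map_mul' A B := by
    ext x
    simp [smulP2_mul]

/-- The action of `PSL(3,ℂ)` on `ℙ²` as a homomorphism into permutations. -/
def actHom : PSL3 →* Equiv.Perm P2 :=
  QuotientGroup.lift (Subgroup.center SL3) slPerm (by
    intro A hA
    ext x
    simpa [slPerm] using congrFun (smulP2_center A hA) x)

/-- The action of an element of `PSL(3,ℂ)` on `ℙ²`. -/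
def pact (g : PSL3) : P2 → P2 := actHom g

instance : MulAction PSL3 P2 where
  smul g x := pact g x
  one_smul x := by
    show pact 1 x = x
    simp [pact]
  mul_smul g h x := by
    show pact (g * h) x = pact g (pact h x)
    simp [pact]

lemma pact_mk (A : SL3) : pact ((QuotientGroup.mk A : PSL3)) = smulP2 A := by
  funext x
  simp [pact, actHom, slPerm]

lemma continuous_pact (g : PSL3) : Continuous (pact g) := by
  obtain ⟨A, rfl⟩ := QuotientGroup.mk_surjective g
  rw [pact_mk]
  exact continuous_smulP2 A

/-- The action of an element of `PSL(3,ℂ)` on `ℙ²`, as a continuous map. -/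
def pactCM (g : PSL3) : C(P2, P2) := ⟨pact g, continuous_pact g⟩
instance : TopologicalSpace SL3 := instTopologicalSpaceSubtype

/-- A complex line in `ℙ²_ℂ`: the set of points whose representing vectors lie in
a fixed 2-dimensional complex linear subspace of `ℂ³`. -/
def IsLine (ℓ : Set P2) : Prop :=
  ∃ W : Submodule ℂ V3, Module.finrank ℂ W = 2 ∧ ℓ = {p : P2 | p.submodule ≤ W}

/-- The set of complex lines contained in a given subset of `ℙ²_ℂ`. -/
def linesIn (S : Set P2) : Set (Set P2) := {ℓ | IsLine ℓ ∧ ℓ ⊆ S}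

/-- A family of lines is in general position if no point lies on three
(pairwise distinct) lines of the family. -/
def InGenPos (L : Set (Set P2)) : Prop :=
  ∀ p : P2, ∀ ℓ₁ ∈ L, ∀ ℓ₂ ∈ L, ∀ ℓ₃ ∈ L,
    p ∈ ℓ₁ → p ∈ ℓ₂ → p ∈ ℓ₃ → ℓ₁ = ℓ₂ ∨ ℓ₁ = ℓ₃ ∨ ℓ₂ = ℓ₃

/-- The families of complex lines in general position contained in the complement of `Ω`. -/
def genFamilies (Ω : Set P2) : Set (Set (Set P2)) :=
  {L | (∀ ℓ ∈ L, IsLine ℓ ∧ ℓ ⊆ Ωᶜ) ∧ InGenPos L}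

/-- `Li Ω` : the number (in `ℕ∞`) of complex lines contained in the complement of `Ω`. -/
def Li (Ω : Set P2) : ℕ∞ := (linesIn Ωᶜ).encard

/-- `LiG Ω` : the maximal number (in `ℕ∞`) of complex lines in general position contained
in the complement of `Ω`. -/
def LiG (Ω : Set P2) : ℕ∞ := ⨆ L ∈ genFamilies Ω, L.encard

/-- `Γ` acts properly discontinuously on the nonempty open invariant set `Ω`. -/
def ActsPropDiscOn (Γ : Subgroup PSL3) (Ω : Set P2) : Prop :=
  Ω.Nonempty ∧ IsOpen Ω ∧ (∀ γ ∈ Γ, pact γ '' Ω = Ω) ∧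
    ∀ K : Set P2, K ⊆ Ω → IsCompact K →
      {γ : PSL3 | γ ∈ Γ ∧ ((pact γ '' K) ∩ K).Nonempty}.Finite

/-- `Ω` is a maximal open set on which `Γ` acts properly discontinuously. -/
def MaxDisc (Γ : Subgroup PSL3) (Ω : Set P2) : Prop :=
  ActsPropDiscOn Γ Ω ∧ ∀ Ω' : Set P2, ActsPropDiscOn Γ Ω' → Ω ⊆ Ω' → Ω' = Ω

/-- `L0 Γ` : the closure of the set of points with infinite isotropy group. -/
def L0 (Γ : Subgroup PSL3) : Set P2 :=
  closure {z : P2 | {γ : PSL3 | γ ∈ Γ ∧ pact γ z = z}.Infinite}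

/-- The cluster points of the orbit `Γ z`. -/
def orbitCluster (Γ : Subgroup PSL3) (z : P2) : Set P2 :=
  {w : P2 | ∀ U ∈ nhds w, {γ : PSL3 | γ ∈ Γ ∧ pact γ z ∈ U}.Infinite}

/-- The cluster points of `Γ K` for a set `K`. -/
def setCluster (Γ : Subgroup PSL3) (K : Set P2) : Set P2 :=
  {w : P2 | ∀ U ∈ nhds w, {γ : PSL3 | γ ∈ Γ ∧ ((pact γ '' K) ∩ U).Nonempty}.Infinite}

/-- `L1 Γ` : the closure of the set of cluster points of orbits `Γ z`, `z ∉ L0 Γ`. -/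
def L1 (Γ : Subgroup PSL3) : Set P2 :=
  closure (⋃ z ∈ (L0 Γ)ᶜ, orbitCluster Γ z)

/-- `L2 Γ` : the closure of the set of cluster points of `Γ K`,
`K` a compact subset of `ℙ²_ℂ ∖ (L0 Γ ∪ L1 Γ)`. -/
def L2 (Γ : Subgroup PSL3) : Set P2 :=
  closure (⋃ K ∈ {K : Set P2 | IsCompact K ∧ K ⊆ (L0 Γ ∪ L1 Γ)ᶜ}, setCluster Γ K)

/-- The Kulkarni limit set `Λ(Γ)`. -/
def kulkarniLimit (Γ : Subgroup PSL3) : Set P2 := L0 Γ ∪ L1 Γ ∪ L2 Γ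

/-- The Kulkarni discontinuity region `Ω(Γ)`. -/
def kulkarniRegion (Γ : Subgroup PSL3) : Set P2 := (kulkarniLimit Γ)ᶜ

/-- `C(Γ)` : the closure of the union of the Kulkarni limit sets of the cyclic
subgroups generated by the elements of `Γ`. -/
def CSet (Γ : Subgroup PSL3) : Set P2 :=
  closure (⋃ γ ∈ Γ, kulkarniLimit (Subgroup.zpowers γ))

/-- The equicontinuity set of `Γ` : points having a neighborhood `U` on which the
restrictions of the elements of `Γ` form a normal family, i.e. a relatively compact
subset of `C(U, ℙ²_ℂ)` for the compact-open topology. -/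
def eqSet (Γ : Subgroup PSL3) : Set P2 :=
  {z : P2 | ∃ U : Set P2, IsOpen U ∧ z ∈ U ∧
    IsCompact (closure {f : C(U, P2) | ∃ γ ∈ Γ, f = (pactCM γ).restrict U})}

/-- A vertex of a family `L` of lines lying in the complement of `Ω`. -/
def IsVertex (Ω : Set P2) (L : Set (Set P2)) (v : P2) : Prop :=
  ∃ ℓ₁ ∈ L, ∃ ℓ₂ ∈ L, ℓ₁ ≠ ℓ₂ ∧ ∃ C : Set (Set P2), C.Infinite ∧
    (∀ ℓ ∈ C, IsLine ℓ ∧ ℓ ⊆ Ωᶜ) ∧ ℓ₁ ∩ ℓ₂ ∩ ⋂₀ C = {v}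

open Classical

/-- Projection from the point `p` onto the line determined by `W` : `projPt p W x` is
the intersection point of the line through `p` and `x` with the line determined by `W`
(junk value if it is not unique). -/
def projPt (p : P2) (W : Submodule ℂ V3) (x : P2) : P2 :=
  if h : ∃ y : P2, y.submodule ≤ W ∧ y.submodule ≤ p.submodule ⊔ x.submodule
  then h.choose else x

/-! ### Topology of `ℙ²_ℂ` and of `PSL(3,ℂ)` -/

abbrev Mat3 := Matrix (Fin 3) (Fin 3) ℂ

lemma unit_smul_ne (a : ℂˣ) {v : V3} (hv : v ≠ 0) : a • v ≠ 0 := by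
  rw [Units.smul_def]
  exact smul_ne_zero a.ne_zero hv

lemma isOpenQuotientMap_mk :
    IsOpenQuotientMap (fun v : {v : V3 // v ≠ 0} => (Projectivization.mk ℂ v.1 v.2 : P2)) := by
  refine IsOpenQuotientMap.of_isOpenMap_isQuotientMap ?_ isQuotientMap_quotient_mk'
  intro s hs
  refine isQuotientMap_quotient_mk'.isOpen_preimage.mp ?_
  have hcont : ∀ a : ℂˣ, Continuous (fun v : {v : V3 // v ≠ 0} =>
      (⟨a • v.1, unit_smul_ne a v.2⟩ : {v : V3 // v ≠ 0})) := fun a =>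
    (continuous_subtype_val.const_smul a).subtype_mk _
  have : (fun v : {v : V3 // v ≠ 0} => (Quotient.mk'' v : P2)) ⁻¹'
      ((fun v : {v : V3 // v ≠ 0} => (Projectivization.mk ℂ v.1 v.2 : P2)) '' s) =
      ⋃ a : ℂˣ, (fun v : {v : V3 // v ≠ 0} =>
        (⟨a • v.1, unit_smul_ne a v.2⟩ : {v : V3 // v ≠ 0})) ⁻¹' s := by
    ext w
    simp only [Set.mem_preimage, Set.mem_iUnion]
    constructor
    · rintro ⟨v, hv, h⟩
      have h' : Projectivization.mk ℂ v.1 v.2 = Projectivization.mk ℂ w.1 w.2 := h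
      rw [Projectivization.mk_eq_mk_iff] at h'
      obtain ⟨a, ha⟩ := h'
      refine ⟨a, ?_⟩
      convert hv
    · rintro ⟨a, ha⟩
      refine ⟨_, ha, ?_⟩
      change Projectivization.mk ℂ _ _ = Projectivization.mk ℂ w.1 w.2
      rw [Projectivization.mk_eq_mk_iff]
      exact ⟨a, rfl⟩
  exact this ▸ isOpen_iUnion fun a => hs.preimage (hcont a)

lemma continuous_mk :
    Continuous (fun v : {v : V3 // v ≠ 0} => (Projectivization.mk ℂ v.1 v.2 : P2)) :=
  isOpenQuotientMap_mk.continuous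

/-- Proportionality of nonzero vectors is the closed condition `vᵢ wⱼ = vⱼ wᵢ`. -/
lemma mk_eq_mk_iff_minors (v w : V3) (hv : v ≠ 0) (hw : w ≠ 0) :
    Projectivization.mk ℂ v hv = Projectivization.mk ℂ w hw ↔
      ∀ i j, v i * w j = v j * w i := by
  rw [Projectivization.mk_eq_mk_iff']
  constructor
  · rintro ⟨a, rfl⟩ i j
    simp only [Pi.smul_apply, smul_eq_mul]
    ring
  · intro h
    obtain ⟨k, hk⟩ := Function.ne_iff.mp hw
    refine ⟨v k / w k, ?_⟩
    funext i
    have hk' : w k ≠ 0 := hk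
    have := h k i
    simp only [Pi.smul_apply, smul_eq_mul]
    field_simp
    linear_combination this

instance : T2Space P2 := by
  rw [t2_iff_isClosed_diagonal]
  have hQ := isOpenQuotientMap_mk.prodMap isOpenQuotientMap_mk
  rw [← hQ.isQuotientMap.isClosed_preimage]
  have : (Prod.map (fun v : {v : V3 // v ≠ 0} => (Projectivization.mk ℂ v.1 v.2 : P2))
      (fun v : {v : V3 // v ≠ 0} => (Projectivization.mk ℂ v.1 v.2 : P2))) ⁻¹'
        Set.diagonal P2 = ⋂ i, ⋂ j, {x : {v : V3 // v ≠ 0} × {v : V3 // v ≠ 0} |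
          x.1.1 i * x.2.1 j = x.1.1 j * x.2.1 i} := by
    ext x
    simp only [Set.mem_preimage, Set.mem_diagonal_iff, Prod.map_fst, Prod.map_snd,
      mk_eq_mk_iff_minors, Set.mem_iInter, Set.mem_ofPred_eq]
  rw [this]
  exact isClosed_iInter fun i => isClosed_iInter fun j =>
    isClosed_eq
      (((continuous_apply i).comp (continuous_subtype_val.comp continuous_fst)).mul
        ((continuous_apply j).comp (continuous_subtype_val.comp continuous_snd)))
      (((continuous_apply j).comp (continuous_subtype_val.comp continuous_fst)).mul
        ((continuous_apply i).comp (continuous_subtype_val.comp continuous_snd)))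

instance : CompactSpace P2 := by
  have hS : IsCompact (Metric.sphere (0 : V3) 1) := isCompact_sphere _ _
  have : CompactSpace (Metric.sphere (0 : V3) 1) := isCompact_iff_compactSpace.mp hS
  have h0 : ∀ v : Metric.sphere (0 : V3) 1, v.1 ≠ 0 := by
    intro v h
    have := v.2
    rw [h] at this
    simp at this
  let f : Metric.sphere (0 : V3) 1 → P2 := fun v => Projectivization.mk ℂ v.1 (h0 v)
  have hf : Continuous f :=
    continuous_mk.comp (continuous_subtype_val.subtype_mk h0)
  have hs : Function.Surjective f := by
    intro p
    induction p using Projectivization.ind with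
    | h v hv =>
      have hn : ‖v‖ ≠ 0 := by simpa using hv
      refine ⟨⟨((‖v‖ : ℂ)⁻¹) • v, ?_⟩, ?_⟩
      · simp [norm_smul, hn]
      · simp only [f]
        rw [Projectivization.mk_eq_mk_iff']
        exact ⟨(‖v‖ : ℂ)⁻¹, rfl⟩
  exact ⟨by simpa [hs.range_eq] using isCompact_range hf⟩

instance : IsTopologicalGroup SL3 :=
  Matrix.SpecialLinearGroup.topologicalGroup

instance : T2Space SL3 := inferInstanceAs (T2Space {A : Mat3 // A.det = 1})

instance : IsClosed ((Subgroup.center SL3 : Subgroup SL3) : Set SL3) := by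
  have : ((Subgroup.center SL3 : Subgroup SL3) : Set SL3) = ⋂ g : SL3, {h | g * h = h * g} := by
    ext h
    simp [Subgroup.mem_center_iff]
  rw [this]
  exact isClosed_iInter fun g =>
    isClosed_eq (continuous_const_mul g) (continuous_mul_const g)

/-! ### Matrices acting on `ℙ²_ℂ` -/

/-- The action of a possibly singular matrix on `ℙ²_ℂ`; off the kernel it sends the class of `v`
to the class of `M v`, and it is the identity (as a junk value) on the kernel. -/
def mact (M : Mat3) (p : P2) : P2 :=
  if h : M *ᵥ p.rep ≠ 0 then Projectivization.mk ℂ (M *ᵥ p.rep) h else p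

lemma mact_mk (M : Mat3) (v : V3) (hv : v ≠ 0) (h : M *ᵥ v ≠ 0) :
    mact M (Projectivization.mk ℂ v hv) = Projectivization.mk ℂ (M *ᵥ v) h := by
  obtain ⟨a, ha⟩ := Projectivization.exists_smul_eq_mk_rep ℂ v hv
  have h1 : M *ᵥ (Projectivization.mk ℂ v hv).rep = a • (M *ᵥ v) := by
    rw [← ha, Units.smul_def, Matrix.mulVec_smul, Units.smul_def]
  have h2 : M *ᵥ (Projectivization.mk ℂ v hv).rep ≠ 0 := by
    rw [h1]
    exact unit_smul_ne a h
  rw [mact, dif_pos h2, Projectivization.mk_eq_mk_iff]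
  exact ⟨a, h1.symm⟩

/-- `(M, [v]) ↦ [M v]` is continuous wherever it is defined. -/
lemma continuousAt_mact (M : Mat3) (v : V3) (hv : v ≠ 0) (h : M *ᵥ v ≠ 0) :
    ContinuousAt (fun x : Mat3 × P2 => mact x.1 x.2) (M, Projectivization.mk ℂ v hv) := by
  have hQ := (IsOpenQuotientMap.id (X := Mat3)).prodMap isOpenQuotientMap_mk
  have := hQ.continuousAt_comp_iff (g := fun x : Mat3 × P2 => mact x.1 x.2)
    (x := (M, ⟨v, hv⟩))
  refine this.mp ?_
  have hc : Continuous (fun x : Mat3 × {v : V3 // v ≠ 0} => x.1 *ᵥ x.2.1) :=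
    continuous_fst.matrix_mulVec (continuous_subtype_val.comp continuous_snd)
  let O : Set (Mat3 × {v : V3 // v ≠ 0}) := {x | x.1 *ᵥ x.2.1 ≠ 0}
  have hO : IsOpen O := isOpen_ne_fun hc continuous_const
  refine ContinuousOn.continuousAt (s := O) ?_ (hO.mem_nhds h)
  rw [continuousOn_iff_continuous_domRestrict]
  have hc2 : Continuous (fun x : O => (Projectivization.mk ℂ (x.1.1 *ᵥ x.1.2.1) x.2 : P2)) :=
    continuous_mk.comp ((hc.comp continuous_subtype_val).subtype_mk fun x => x.2)
  convert hc2 using 1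
  funext x
  exact mact_mk _ _ _ _

/-- `M` is a matrix inducing the projective transformation `γ`. -/
def MatRep (γ : PSL3) (M : Mat3) : Prop :=
  ∃ A : SL3, (QuotientGroup.mk A : PSL3) = γ ∧ ∃ s : ℂ, s ≠ 0 ∧ M = s • (A : Mat3)

lemma MatRep.mulVec_ne {γ : PSL3} {M : Mat3} (h : MatRep γ M) {v : V3} (hv : v ≠ 0) :
    M *ᵥ v ≠ 0 := by
  obtain ⟨A, -, s, hs, rfl⟩ := h
  rw [Matrix.smul_mulVec]
  refine smul_ne_zero hs ?_
  have := (Matrix.SpecialLinearGroup.toLin' A).map_ne_zero_iff.mpr hv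
  simpa [Matrix.SpecialLinearGroup.toLin'_apply] using this

lemma MatRep.pact_mk {γ : PSL3} {M : Mat3} (h : MatRep γ M) (v : V3) (hv : v ≠ 0) :
    pact γ (Projectivization.mk ℂ v hv) = Projectivization.mk ℂ (M *ᵥ v) (h.mulVec_ne hv) := by
  obtain ⟨A, rfl, s, hs, rfl⟩ := h
  rw [_root_.pact_mk, smulP2_mk, Projectivization.mk_eq_mk_iff']
  refine ⟨s⁻¹, ?_⟩
  rw [Matrix.smul_mulVec, smul_smul, inv_mul_cancel₀ hs, one_smul]
  simp [Matrix.SpecialLinearGroup.toLin'_apply]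

lemma MatRep.pact_eq {γ : PSL3} {M : Mat3} (h : MatRep γ M) (p : P2) : pact γ p = mact M p := by
  induction p using Projectivization.ind with
  | h v hv => rw [h.pact_mk, mact_mk]

lemma MatRep.mul {γ γ' : PSL3} {M M' : Mat3} (h : MatRep γ M) (h' : MatRep γ' M') :
    MatRep (γ * γ') (M * M') := by
  obtain ⟨A, rfl, s, hs, rfl⟩ := h
  obtain ⟨A', rfl, s', hs', rfl⟩ := h'
  exact ⟨A * A', rfl, s * s', mul_ne_zero hs hs', by
    rw [Matrix.SpecialLinearGroup.coe_mul, Matrix.smul_mul, Matrix.mul_smul, smul_smul]⟩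

lemma MatRep.det_ne {γ : PSL3} {M : Mat3} (h : MatRep γ M) : M.det ≠ 0 := by
  obtain ⟨A, rfl, s, hs, rfl⟩ := h
  rw [Matrix.det_smul, A.2]
  simpa using hs

lemma MatRep.inv {γ : PSL3} {M N : Mat3} (h : MatRep γ M) (hN : M * N = 1) : MatRep γ⁻¹ N := by
  obtain ⟨A, rfl, s, hs, rfl⟩ := h
  refine ⟨A⁻¹, rfl, s⁻¹, inv_ne_zero hs, ?_⟩
  have h1 : ((A⁻¹ : SL3) : Mat3) * (A : Mat3) = 1 := by
    rw [← Matrix.SpecialLinearGroup.coe_mul, inv_mul_cancel, Matrix.SpecialLinearGroup.coe_one]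
  calc N = s⁻¹ • (((A⁻¹ : SL3) : Mat3) * ((s • (A : Mat3)) * N)) := by
        rw [Matrix.smul_mul, Matrix.mul_smul, smul_smul, inv_mul_cancel₀ hs, one_smul,
          ← Matrix.mul_assoc, h1, Matrix.one_mul]
    _ = _ := by rw [hN, Matrix.mul_one]

lemma exists_rep (γ : PSL3) : ∃ M, MatRep γ M := by
  obtain ⟨A, rfl⟩ := QuotientGroup.mk_surjective γ
  exact ⟨A, A, rfl, 1, one_ne_zero, (one_smul _ _).symm⟩

lemma MatRep.smul {γ : PSL3} {M : Mat3} (h : MatRep γ M) {s : ℂ} (hs : s ≠ 0) : MatRep γ (s • M) := by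
  obtain ⟨A, hA, t, ht, rfl⟩ := h
  exact ⟨A, hA, s * t, mul_ne_zero hs ht, by rw [smul_smul]⟩

/-- A projective transformation determines its matrix up to a scalar. -/
lemma MatRep.unique {γ : PSL3} {M N : Mat3} (h : MatRep γ M) (h' : MatRep γ N) :
    ∃ s : ℂ, N = s • M := by
  obtain ⟨A, hA, s, hs, rfl⟩ := h
  obtain ⟨B, hB, t, ht, rfl⟩ := h'
  rw [← hB, QuotientGroup.eq] at hA
  obtain ⟨r, -, hr⟩ := Matrix.SpecialLinearGroup.mem_center_iff.mp hA
  have hBA : (B : Mat3) = (A : Mat3) * ((A⁻¹ * B : SL3) : Mat3) := by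
    rw [← Matrix.SpecialLinearGroup.coe_mul, mul_inv_cancel_left]
  refine ⟨t * r * s⁻¹, ?_⟩
  rw [hBA, ← hr, smul_smul, mul_assoc, mul_assoc, inv_mul_cancel₀ hs, mul_one, mul_smul]
  congr 1
  ext i j
  simp [Matrix.scalar_apply, Matrix.mul_diagonal, mul_comm]

/-- Only finitely many elements of a discrete group are induced by matrices from a given compact
set of invertible matrices. -/
lemma finite_of_compact_rep (Γ : Subgroup PSL3) (hΓ : DiscreteTopology ↥Γ) (C : Set Mat3)
    (hC : IsCompact C) (hdet : ∀ M ∈ C, M.det ≠ 0) :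
    {γ : PSL3 | γ ∈ Γ ∧ ∃ M ∈ C, MatRep γ M}.Finite := by
  -- entries of `M` and of `(det M)⁻¹` are bounded on `C`, so normalised matrices are bounded
  have hb1 : ∃ R : ℝ, ∀ M ∈ C, ∀ i j, ‖M i j‖ ≤ R := by
    have : ∀ i j, ∃ R : ℝ, ∀ M ∈ C, ‖M i j‖ ≤ R := fun i j =>
      hC.exists_bound_of_continuousOn
        (f := fun M : Mat3 => M i j) (by fun_prop)
    choose R hR using this
    refine ⟨∑ i, ∑ j, |R i j|, fun M hM i j => ((hR i j M hM).trans (le_abs_self _)).trans ?_⟩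
    exact (Finset.single_le_sum (f := fun j => |R i j|) (fun _ _ => abs_nonneg _)
      (Finset.mem_univ j)).trans (Finset.single_le_sum (f := fun i => ∑ j, |R i j|)
        (fun _ _ => Finset.sum_nonneg fun _ _ => abs_nonneg _) (Finset.mem_univ i))
  obtain ⟨R, hR⟩ := hb1
  obtain ⟨D, hD⟩ : ∃ D : ℝ, ∀ M ∈ C, ‖(M.det)⁻¹‖ ≤ D :=
    hC.exists_bound_of_continuousOn (f := fun M : Mat3 => (M.det)⁻¹)
      (ContinuousOn.inv₀ (Continuous.matrix_det continuous_id).continuousOn hdet)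
  let E : ℝ := max 1 D
  let B : Set SL3 := {A | ∀ i j, ‖(A : Mat3) i j‖ ≤ E * |R|}
  have hB : IsCompact B := by
    have hcl : IsClosed {A : Mat3 | A.det = 1} :=
      isClosed_eq (Continuous.matrix_det continuous_id) continuous_const
    have h1 : IsCompact {A : Mat3 | ∀ i j, ‖A i j‖ ≤ E * |R|} := by
      have : {A : Mat3 | ∀ i j, ‖A i j‖ ≤ E * |R|} =
          Set.pi Set.univ fun i => Set.pi Set.univ fun j =>
            Metric.closedBall (0 : ℂ) (E * |R|) := by
        ext A
        constructor
        · intro h i _ j _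
          simpa using h i j
        · intro h i j
          simpa using h i trivial j trivial
      rw [this]
      exact isCompact_univ_pi fun i => isCompact_univ_pi fun j => isCompact_closedBall _ _
    exact hcl.isClosedEmbedding_subtypeVal.isCompact_preimage h1
  have hB' : IsCompact ((QuotientGroup.mk : SL3 → PSL3) '' B) :=
    hB.image QuotientGroup.continuous_mk
  have hΓc : IsClosed (Γ : Set PSL3) := Subgroup.isClosed_of_discrete
  have hfin : ((Γ : Set PSL3) ∩ (QuotientGroup.mk : SL3 → PSL3) '' B).Finite := by
    have hcomp : IsCompact ((Subtype.val : Γ → PSL3) ⁻¹' ((QuotientGroup.mk : SL3 → PSL3) '' B)) :=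
      hΓc.isClosedEmbedding_subtypeVal.isCompact_preimage hB'
    have := hcomp.finite_of_discrete.image (Subtype.val : Γ → PSL3)
    refine this.subset ?_
    rintro γ ⟨hγ, hγB⟩
    exact ⟨⟨γ, hγ⟩, hγB, rfl⟩
  refine hfin.subset ?_
  rintro γ ⟨hγ, M, hM, A, rfl, s, hs, rfl⟩
  refine ⟨hγ, A, fun i j => ?_, rfl⟩
  have h1 : ‖s‖ * ‖(A : Mat3) i j‖ ≤ R := by simpa using hR _ hM i j
  have h2 : (‖s‖ ^ 3)⁻¹ ≤ D := by simpa [Matrix.det_smul, A.2] using hD _ hM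
  have hs0 : 0 < ‖s‖ := norm_pos_iff.mpr hs
  have h3 : ‖s‖⁻¹ ≤ E := by
    by_contra hcon
    rw [not_le] at hcon
    have h4 : 1 < ‖s‖⁻¹ := (le_max_left _ _).trans_lt hcon
    have h5 : D < ‖s‖⁻¹ := (le_max_right _ _).trans_lt hcon
    have h6 : ‖s‖⁻¹ ≤ (‖s‖⁻¹) ^ 3 := le_self_pow₀ h4.le (by norm_num)
    rw [inv_pow] at h6
    linarith
  calc ‖(A : Mat3) i j‖ = ‖s‖⁻¹ * (‖s‖ * ‖(A : Mat3) i j‖) := by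
        field_simp
    _ ≤ E * |R| := mul_le_mul h3 (h1.trans (le_abs_self _)) (by positivity)
        (le_trans (by positivity) h3)

lemma pact_mul (g h : PSL3) (x : P2) : pact (g * h) x = pact g (pact h x) := by
  simp [pact]

lemma pact_one (x : P2) : pact 1 x = x := by
  simp [pact]

lemma pact_inv_pact (g : PSL3) (x : P2) : pact g⁻¹ (pact g x) = x := by
  rw [← pact_mul, inv_mul_cancel, pact_one]

lemma pact_pact_inv (g : PSL3) (x : P2) : pact g (pact g⁻¹ x) = x := by
  rw [← pact_mul, mul_inv_cancel, pact_one]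

/-! ### Dynamics of groups with a compact set of limit matrices -/

lemma continuousOn_mact {Z : Set P2} {C : Set Mat3}
    (hker : ∀ M ∈ C, ∀ v hv, Projectivization.mk ℂ v hv ∉ Z → M *ᵥ v ≠ 0) :
    ContinuousOn (fun x : Mat3 × P2 => mact x.1 x.2) (C ×ˢ Zᶜ) := by
  rintro ⟨M, p⟩ ⟨hM, hp⟩
  induction p using Projectivization.ind with
  | h v hv => exact (continuousAt_mact M v hv (hker M hM v hv hp)).continuousWithinAt

/-- If the elements of `Γ₁` are induced by matrices from a compact set `C`, whose members are
defined off `Z`, the singular ones mapping `Zᶜ` into `Z`, then `Γ₁` moves only finitely often a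
compact subset of `Zᶜ` so as to meet another. -/
lemma finite_meet (Γ : Subgroup PSL3) (hΓ : DiscreteTopology ↥Γ) (Γ₁ : Subgroup PSL3)
    (hle : Γ₁ ≤ Γ) (Z : Set P2) (C : Set Mat3) (hC : IsCompact C)
    (hrep : ∀ γ ∈ Γ₁, ∃ M ∈ C, MatRep γ M)
    (hker : ∀ M ∈ C, ∀ v hv, Projectivization.mk ℂ v hv ∉ Z → M *ᵥ v ≠ 0)
    (hsing : ∀ M ∈ C, M.det = 0 → ∀ p ∉ Z, mact M p ∈ Z)
    (K K' : Set P2) (hK : IsCompact K) (hK' : IsCompact K') (hKZ : K ⊆ Zᶜ) (hKZ' : K' ⊆ Zᶜ) :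
    {γ : PSL3 | γ ∈ Γ₁ ∧ ∃ x ∈ K, pact γ x ∈ K'}.Finite := by
  let T : Set (Mat3 × P2) := (C ×ˢ K) ∩ (fun x : Mat3 × P2 => mact x.1 x.2) ⁻¹' K'
  have hcl : IsClosed T :=
    ((continuousOn_mact hker).mono (Set.prod_mono le_rfl hKZ)).preimage_isClosed_of_isClosed
      (hC.prod hK).isClosed hK'.isClosed
  have hT : IsCompact T := (hC.prod hK).of_isClosed_subset hcl Set.inter_subset_left
  refine (finite_of_compact_rep Γ hΓ (Prod.fst '' T) (hT.image continuous_fst) ?_).subset ?_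
  · rintro _ ⟨⟨M, p⟩, ⟨⟨hM, hp⟩, hMp⟩, rfl⟩ hdet
    exact hKZ' hMp (hsing M hM hdet p (hKZ hp))
  · rintro γ ⟨hγ, x, hx, hγx⟩
    obtain ⟨M, hM, hr⟩ := hrep γ hγ
    refine ⟨hle hγ, M, ⟨(M, x), ⟨⟨hM, hx⟩, ?_⟩, rfl⟩, hr⟩
    change mact M x ∈ K'
    rwa [← hr.pact_eq]

/-- If a finite-index subgroup `Γ₁` of `Γ` is induced by a compact set of matrices as in
`finite_meet`, and every point of `Z` has infinite isotropy, then all three kinds of domains of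
`Γ` contain `Zᶜ`. -/
lemma compl_subset_of_dynamics (Γ : Subgroup PSL3) (hΓ : DiscreteTopology ↥Γ)
    (Γ₁ : Subgroup PSL3) (hle : Γ₁ ≤ Γ) (F : Set PSL3) (hF : F.Finite) (hFΓ : F ⊆ Γ)
    (hcos : ∀ γ ∈ Γ, ∃ f ∈ F, ∃ γ₁ ∈ Γ₁, γ = f * γ₁)
    (Z : Set P2) (hZ : IsClosed Z) (C : Set Mat3) (hC : IsCompact C)
    (hrep : ∀ γ ∈ Γ₁, ∃ M ∈ C, MatRep γ M)
    (hker : ∀ M ∈ C, ∀ v hv, Projectivization.mk ℂ v hv ∉ Z → M *ᵥ v ≠ 0)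
    (hsing : ∀ M ∈ C, M.det = 0 → ∀ p ∉ Z, mact M p ∈ Z)
    (hiso : ∀ z ∈ Z, {γ : PSL3 | γ ∈ Γ ∧ pact γ z = z}.Infinite)
    (Ω : Set P2) (hΩ : Ω = eqSet Γ ∨ Ω = kulkarniRegion Γ ∨ MaxDisc Γ Ω) :
    Ωᶜ ⊆ Z := by
  have hfm := finite_meet Γ hΓ Γ₁ hle Z C hC hrep hker hsing
  -- points off `Z` have finite isotropy, hence `Z` is the set of points with infinite isotropy
  have hisoU : ∀ u ∉ Z, {γ : PSL3 | γ ∈ Γ ∧ pact γ u = u}.Finite := by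
    intro u hu
    have hfin : {γ : PSL3 | γ ∈ Γ₁ ∧ ∃ x ∈ ({u} : Set P2), pact γ x ∈ ({u} : Set P2)}.Finite :=
      hfm {u} {u} isCompact_singleton isCompact_singleton (by simpa using hu) (by simpa using hu)
    have hsub : {γ : PSL3 | γ ∈ Γ ∧ pact γ u = u} ⊆
        ⋃ f ∈ F, {γ : PSL3 | (∃ γ₁ ∈ Γ₁, γ = f * γ₁) ∧ pact γ u = u} := by
      rintro γ ⟨hγ, hu⟩
      obtain ⟨f, hf, h⟩ := hcos γ hγ
      exact Set.mem_biUnion hf ⟨h, hu⟩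
    refine (hF.biUnion fun f _ => ?_).subset hsub
    by_cases hne : ∃ γ₀ : PSL3, (∃ γ₁ ∈ Γ₁, γ₀ = f * γ₁) ∧ pact γ₀ u = u
    · obtain ⟨γ₀, ⟨γ₁, hγ₁, rfl⟩, h0⟩ := hne
      refine (hfin.image (fun g => f * γ₁ * g)).subset ?_
      rintro _ ⟨⟨γ₂, hγ₂, rfl⟩, h2⟩
      refine ⟨γ₁⁻¹ * γ₂, ⟨Γ₁.mul_mem (Γ₁.inv_mem hγ₁) hγ₂, u, rfl, ?_⟩, by group⟩
      have : γ₁⁻¹ * γ₂ = (f * γ₁)⁻¹ * (f * γ₂) := by group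
      change pact _ u = u
      rw [this, pact_mul, h2]
      conv_lhs => rw [← h0]
      exact pact_inv_pact _ _
    · refine Set.Finite.subset Set.finite_empty ?_
      rintro γ hγ
      exact (hne ⟨γ, hγ⟩).elim
  have hinvZ : ∀ g ∈ Γ, ∀ x, x ∈ Z → pact g x ∈ Z := by
    intro g hg x hx
    by_contra hgx
    refine hiso x hx (((hisoU _ hgx).image (fun γ => g⁻¹ * γ * g)).subset ?_)
    rintro γ ⟨hγ, hγx⟩
    refine ⟨g * γ * g⁻¹, ⟨Γ.mul_mem (Γ.mul_mem hg hγ) (Γ.inv_mem hg), ?_⟩, by group⟩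
    rw [pact_mul, pact_inv_pact, pact_mul, hγx]
  have hinvU : ∀ g ∈ Γ, ∀ x, x ∉ Z → pact g x ∉ Z := by
    intro g hg x hx h
    have := hinvZ _ (Γ.inv_mem hg) _ h
    rw [pact_inv_pact] at this
    exact hx this
  have hfmΓ : ∀ K K' : Set P2, IsCompact K → IsCompact K' → K ⊆ Zᶜ → K' ⊆ Zᶜ →
      {γ : PSL3 | γ ∈ Γ ∧ ∃ x ∈ K, pact γ x ∈ K'}.Finite := by
    intro K K' hK hK' hKZ hKZ'
    have hsub : {γ : PSL3 | γ ∈ Γ ∧ ∃ x ∈ K, pact γ x ∈ K'} ⊆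
        ⋃ f ∈ F, (fun g => f * g) ''
          {γ : PSL3 | γ ∈ Γ₁ ∧ ∃ x ∈ K, pact γ x ∈ pact f⁻¹ '' K'} := by
      rintro γ ⟨hγ, x, hx, hγx⟩
      obtain ⟨f, hf, γ₁, hγ₁, rfl⟩ := hcos γ hγ
      refine Set.mem_biUnion hf ⟨γ₁, ⟨hγ₁, x, hx, pact (f * γ₁) x, hγx, ?_⟩, rfl⟩
      rw [pact_mul, pact_inv_pact]
    refine (hF.biUnion fun f hf => ?_).subset hsub
    refine (hfm K _ hK (hK'.image (continuous_pact _)) hKZ ?_).image _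
    rintro _ ⟨y, hy, rfl⟩
    exact hinvU _ (Γ.inv_mem (hFΓ hf)) _ (hKZ' hy)
  rcases hΩ with rfl | rfl | hmax
  · -- the equicontinuity set
    rw [Set.compl_subset_comm]
    intro z hz
    refine ⟨Zᶜ, hZ.isOpen_compl, hz, ?_⟩
    let Φ : C(C × (Zᶜ : Set P2), P2) :=
      ⟨fun x => mact x.1.1 x.2.1, by
        have := continuousOn_mact hker
        rw [continuousOn_iff_continuous_domRestrict] at this
        exact this.comp (((continuous_subtype_val.comp continuous_fst).prodMk
          (continuous_subtype_val.comp continuous_snd)).subtype_mk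
            (fun x : C × (Zᶜ : Set P2) => Set.mk_mem_prod x.1.2 x.2.2))⟩
    have : CompactSpace C := isCompact_iff_compactSpace.mp hC
    let S : Set C((Zᶜ : Set P2), P2) := ⋃ f ∈ F, Set.range fun M : C => (pactCM f).comp (Φ.curry M)
    have hS : IsCompact S := hF.isCompact_biUnion fun f _ =>
      isCompact_range (((pactCM f).continuous_postcomp).comp Φ.curry.continuous)
    refine hS.closure_of_subset ?_
    rintro _ ⟨γ, hγ, rfl⟩
    obtain ⟨f, hf, γ₁, hγ₁, rfl⟩ := hcos γ hγ
    obtain ⟨M, hM, hr⟩ := hrep γ₁ hγ₁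
    refine Set.mem_biUnion hf ⟨⟨M, hM⟩, ?_⟩
    ext x
    change pact f (mact M x.1) = pact (f * γ₁) x.1
    rw [pact_mul, hr.pact_eq]
  · -- the Kulkarni region
    have hL0 : Z ⊆ L0 Γ := fun z hz => subset_closure (hiso z hz)
    have hnb : ∀ w ∉ Z, ∃ N ∈ 𝓝 w, N ⊆ Zᶜ ∧ IsCompact N := fun w hw =>
      local_compact_nhds (hZ.isOpen_compl.mem_nhds hw)
    rw [kulkarniRegion, compl_compl]
    rintro z ((hz | hz) | hz)
    · refine closure_minimal ?_ hZ hz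
      intro x hx
      by_contra hxZ
      exact hx (hisoU x hxZ)
    · refine closure_minimal ?_ hZ hz
      refine Set.iUnion₂_subset fun x hx w hw => ?_
      by_contra hwZ
      obtain ⟨N, hN, hNZ, hNc⟩ := hnb w hwZ
      refine hw N hN ((hfmΓ {x} N isCompact_singleton hNc ?_ hNZ).subset ?_)
      · rintro _ rfl h
        exact hx (hL0 h)
      · rintro γ ⟨hγ, h⟩
        exact ⟨hγ, x, rfl, h⟩
    · refine closure_minimal ?_ hZ hz
      refine Set.iUnion₂_subset fun K hK w hw => ?_
      by_contra hwZ
      obtain ⟨N, hN, hNZ, hNc⟩ := hnb w hwZ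
      refine hw N hN ((hfmΓ K N hK.1 hNc ?_ hNZ).subset ?_)
      · intro x hx h
        exact hK.2 hx (Or.inl (hL0 h))
      · rintro γ ⟨hγ, _, ⟨x, hx, rfl⟩, h⟩
        exact ⟨hγ, x, hx, h⟩
  · -- a maximal domain
    obtain ⟨⟨hne, -, -, hfin⟩, hm⟩ := hmax
    have hsub : Ω ⊆ Zᶜ := by
      intro z hz hzZ
      refine hiso z hzZ ((hfin {z} (by simpa using hz) isCompact_singleton).subset ?_)
      rintro γ ⟨hγ, h⟩
      exact ⟨hγ, z, ⟨z, rfl, h⟩, rfl⟩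
    have hU : ActsPropDiscOn Γ Zᶜ := by
      refine ⟨hne.mono hsub, hZ.isOpen_compl, fun γ hγ => ?_, fun K hKZ hK => ?_⟩
      · apply Set.Subset.antisymm
        · rintro _ ⟨x, hx, rfl⟩
          exact hinvU γ hγ x hx
        · intro x hx
          exact ⟨pact γ⁻¹ x, hinvU _ (Γ.inv_mem hγ) x hx, pact_pact_inv _ _⟩
      · refine (hfmΓ K K hK hK hKZ hKZ).subset ?_
        rintro γ ⟨hγ, _, ⟨x, hx, rfl⟩, h⟩
        exact ⟨hγ, x, hx, h⟩
    rw [← hm _ hU hsub, compl_compl]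

/-! ### Invariance of the domains -/

lemma eqSet_invariant (Γ : Subgroup PSL3) {γ : PSL3} (hγ : γ ∈ Γ) {z : P2} (hz : z ∈ eqSet Γ) :
    pact γ z ∈ eqSet Γ := by
  obtain ⟨U, hU, hzU, hc⟩ := hz
  refine ⟨pact γ⁻¹ ⁻¹' U, hU.preimage (continuous_pact _), ?_, ?_⟩
  · change pact γ⁻¹ (pact γ z) ∈ U
    rwa [pact_inv_pact]
  · let j : C((pact γ⁻¹ ⁻¹' U : Set P2), U) :=
      ⟨fun x => ⟨pact γ⁻¹ x.1, x.2⟩,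
        ((continuous_pact _).comp continuous_subtype_val).subtype_mk _⟩
    have hS := hc.image (ContinuousMap.continuous_precomp (Z := P2) j)
    refine hS.closure_of_subset ?_
    rintro _ ⟨g, hg, rfl⟩
    refine ⟨(pactCM (g * γ)).restrict U, subset_closure ⟨g * γ, Γ.mul_mem hg hγ, rfl⟩, ?_⟩
    ext x
    change pact (g * γ) (pact γ⁻¹ x.1) = pact g x.1
    rw [pact_mul, pact_pact_inv]

lemma kulkarniLimit_invariant (Γ : Subgroup PSL3) {γ : PSL3} (hγ : γ ∈ Γ) {z : P2}
    (hz : z ∈ kulkarniLimit Γ) : pact γ z ∈ kulkarniLimit Γ := by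
  have hinj : Function.Injective (fun g : PSL3 => γ * g) := mul_right_injective γ
  rcases hz with (hz | hz) | hz
  · refine Or.inl (Or.inl (Set.MapsTo.closure ?_ (continuous_pact γ) hz))
    intro x hx
    have hinj' : Function.Injective (fun g : PSL3 => γ * g * γ⁻¹) := fun a b h => by
      simpa using h
    refine (hx.image hinj'.injOn).mono ?_
    rintro _ ⟨g, ⟨hg, hgx⟩, rfl⟩
    refine ⟨Γ.mul_mem (Γ.mul_mem hγ hg) (Γ.inv_mem hγ), ?_⟩
    rw [pact_mul, pact_inv_pact, pact_mul, hgx]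
  · refine Or.inl (Or.inr (Set.MapsTo.closure ?_ (continuous_pact γ) hz))
    intro x hx
    simp only [Set.mem_iUnion] at hx ⊢
    obtain ⟨y, hy, hx⟩ := hx
    refine ⟨y, hy, fun U hU => ?_⟩
    refine ((hx _ ((continuous_pact γ).continuousAt.preimage_mem_nhds hU)).image
      hinj.injOn).mono ?_
    rintro _ ⟨g, ⟨hg, hgx⟩, rfl⟩
    exact ⟨Γ.mul_mem hγ hg, by rwa [pact_mul]⟩
  · refine Or.inr (Set.MapsTo.closure ?_ (continuous_pact γ) hz)
    intro x hx
    simp only [Set.mem_iUnion] at hx ⊢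
    obtain ⟨K, hK, hx⟩ := hx
    refine ⟨K, hK, fun U hU => ?_⟩
    refine ((hx _ ((continuous_pact γ).continuousAt.preimage_mem_nhds hU)).image
      hinj.injOn).mono ?_
    rintro _ ⟨g, ⟨hg, _, ⟨y, hy, rfl⟩, hgx⟩, rfl⟩
    refine ⟨Γ.mul_mem hγ hg, pact γ (pact g y), ⟨y, hy, pact_mul _ _ _⟩, hgx⟩

lemma compl_invariant (Γ : Subgroup PSL3) (Ω : Set P2)
    (hΩ : Ω = eqSet Γ ∨ Ω = kulkarniRegion Γ ∨ MaxDisc Γ Ω) {γ : PSL3} (hγ : γ ∈ Γ) {z : P2}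
    (hz : z ∈ Ωᶜ) : pact γ z ∈ Ωᶜ := by
  rcases hΩ with rfl | rfl | hmax
  · intro h
    have := eqSet_invariant Γ (Γ.inv_mem hγ) h
    rw [pact_inv_pact] at this
    exact hz this
  · rw [kulkarniRegion, compl_compl] at hz ⊢
    exact kulkarniLimit_invariant Γ hγ hz
  · intro h
    have := hmax.1.2.2.1 γ⁻¹ (Γ.inv_mem hγ)
    rw [← pact_inv_pact γ z] at hz
    exact hz (this ▸ ⟨_, h, rfl⟩)

/-! ### Lines and vertices -/

lemma mk_submodule_le (v : V3) (hv : v ≠ 0) (W : Submodule ℂ V3) :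
    (Projectivization.mk ℂ v hv).submodule ≤ W ↔ v ∈ W := by
  rw [Projectivization.submodule_mk, Submodule.span_singleton_le_iff_mem]

lemma finrank_V3 : Module.finrank ℂ V3 = 3 := by simp

lemma line_inter {ℓ₁ ℓ₂ : Set P2} (h₁ : IsLine ℓ₁) (h₂ : IsLine ℓ₂) (hne : ℓ₁ ≠ ℓ₂) :
    ∃ x, ℓ₁ ∩ ℓ₂ = {x} := by
  obtain ⟨W₁, hW₁, rfl⟩ := h₁
  obtain ⟨W₂, hW₂, rfl⟩ := h₂
  have hW : W₁ ≠ W₂ := by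
    rintro rfl
    exact hne rfl
  have hlt : W₁ < W₁ ⊔ W₂ := by
    refine lt_of_le_of_ne le_sup_left fun h => hW ?_
    have h2 : W₂ ≤ W₁ := by
      rw [h]
      exact le_sup_right
    exact (Submodule.eq_of_le_of_finrank_eq h2 (by rw [hW₁, hW₂])).symm
  have h3 := Submodule.finrank_lt_finrank_of_lt hlt
  have h4 := Submodule.finrank_le (W₁ ⊔ W₂)
  have h5 := Submodule.finrank_sup_add_finrank_inf_eq W₁ W₂
  rw [finrank_V3] at h4
  have h6 : Module.finrank ℂ (W₁ ⊓ W₂ : Submodule ℂ V3) = 1 := by omega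
  refine ⟨Projectivization.mk'' (W₁ ⊓ W₂) h6, ?_⟩
  ext p
  constructor
  · rintro ⟨hp₁, hp₂⟩
    apply Projectivization.submodule_injective
    rw [Projectivization.submodule_mk'']
    exact Submodule.eq_of_le_of_finrank_eq (le_inf hp₁ hp₂)
      (by rw [Projectivization.finrank_submodule, h6])
  · rintro rfl
    constructor
    · change Projectivization.submodule _ ≤ _
      rw [Projectivization.submodule_mk'']
      exact inf_le_left
    · change Projectivization.submodule _ ≤ _
      rw [Projectivization.submodule_mk'']
      exact inf_le_right

lemma line_eq_of_two_points {ℓ₁ ℓ₂ : Set P2} (h₁ : IsLine ℓ₁) (h₂ : IsLine ℓ₂) {x y : P2}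
    (hxy : x ≠ y) (hx₁ : x ∈ ℓ₁) (hx₂ : x ∈ ℓ₂) (hy₁ : y ∈ ℓ₁) (hy₂ : y ∈ ℓ₂) : ℓ₁ = ℓ₂ := by
  by_contra hne
  obtain ⟨z, hz⟩ := line_inter h₁ h₂ hne
  have hx : x ∈ ({z} : Set P2) := hz ▸ ⟨hx₁, hx₂⟩
  have hy : y ∈ ({z} : Set P2) := hz ▸ ⟨hy₁, hy₂⟩
  exact hxy (hx.trans hy.symm)

lemma isLine_image {ℓ : Set P2} (h : IsLine ℓ) (γ : PSL3) : IsLine (pact γ '' ℓ) := by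
  obtain ⟨W, hW, rfl⟩ := h
  obtain ⟨A, rfl⟩ := QuotientGroup.mk_surjective γ
  let e := Matrix.SpecialLinearGroup.toLin' A
  refine ⟨W.map (e : V3 →ₗ[ℂ] V3), by rw [LinearEquiv.finrank_map_eq e, hW], ?_⟩
  rw [pact_mk]
  ext p
  induction p using Projectivization.ind with
  | h v hv =>
    simp only [Set.mem_ofPred_eq, mk_submodule_le]
    constructor
    · rintro ⟨q, hq, hqv⟩
      induction q using Projectivization.ind with
      | h w hw =>
        rw [Set.mem_ofPred_eq, mk_submodule_le] at hq
        rw [smulP2_mk, Projectivization.mk_eq_mk_iff'] at hqv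
        obtain ⟨a, ha⟩ := hqv
        have ha0 : a ≠ 0 := by
          rintro rfl
          exact e.map_ne_zero_iff.mpr hw (by rw [← ha, zero_smul])
        refine ⟨a⁻¹ • w, W.smul_mem _ hq, ?_⟩
        change e (a⁻¹ • w) = v
        rw [map_smul]
        change a⁻¹ • (Matrix.SpecialLinearGroup.toLin' A w) = v
        rw [← ha, smul_smul, inv_mul_cancel₀ ha0, one_smul]
    · rintro ⟨w, hw, rfl⟩
      have hw0 : w ≠ 0 := by
        rintro rfl
        exact hv (map_zero _)
      exact ⟨Projectivization.mk ℂ w hw0, (mk_submodule_le _ _ _).mpr hw, rfl⟩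

/-- The points lying on infinitely many lines of the complement of `Ω`. -/
def manyLines (Ω : Set P2) : Set P2 := {p | {m ∈ linesIn Ωᶜ | p ∈ m}.Infinite}

/-- The pairwise intersection points of the lines of `L`. -/
def crossings (L : Set (Set P2)) : Set P2 :=
  {x | ∃ ℓ₁ ∈ L, ∃ ℓ₂ ∈ L, ℓ₁ ≠ ℓ₂ ∧ ℓ₁ ∩ ℓ₂ = {x}}

lemma crossings_finite {L : Set (Set P2)} (hfin : L.Finite) : (crossings L).Finite := by
  have hsub : crossings L ⊆ ⋃ ℓ₁ ∈ L, ⋃ ℓ₂ ∈ L, {x | ℓ₁ ∩ ℓ₂ = {x}} := by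
    rintro x ⟨ℓ₁, h₁, ℓ₂, h₂, -, hx⟩
    exact Set.mem_biUnion h₁ (Set.mem_biUnion h₂ hx)
  refine (hfin.biUnion fun ℓ₁ _ => hfin.biUnion fun ℓ₂ _ => Set.Subsingleton.finite ?_).subset hsub
  intro x hx y hy
  exact Set.singleton_injective (hx.symm.trans hy)

/-- By maximality of `L`, each line in the complement of `Ω` passes through a crossing of `L`. -/
lemma exists_crossing {Ω : Set P2} (h4 : 4 ≤ LiG Ω) (hfin : LiG Ω ≠ ⊤)
    {L : Set (Set P2)} (hL : L ∈ genFamilies Ω) (hcard : L.encard = LiG Ω)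
    {m : Set P2} (hm : m ∈ linesIn Ωᶜ) : ∃ x ∈ crossings L, x ∈ m := by
  have key : ∀ ℓ₁ ∈ L, ∀ ℓ₂ ∈ L, ℓ₁ ≠ ℓ₂ → ∀ p ∈ ℓ₁, p ∈ ℓ₂ → p ∈ crossings L := by
    intro ℓ₁ h₁ ℓ₂ h₂ hne p hp₁ hp₂
    obtain ⟨x, hx⟩ := line_inter (hL.1 _ h₁).1 (hL.1 _ h₂).1 hne
    have : p ∈ ({x} : Set P2) := hx ▸ ⟨hp₁, hp₂⟩
    obtain rfl : p = x := this
    exact ⟨ℓ₁, h₁, ℓ₂, h₂, hne, hx⟩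
  by_cases hmL : m ∈ L
  · have : ∃ ℓ ∈ L, ℓ ≠ m := by
      by_contra! hcon
      have : L ⊆ {m} := fun ℓ hℓ => hcon ℓ hℓ
      have h1 := Set.encard_le_encard this
      rw [Set.encard_singleton, hcard] at h1
      exact absurd (h4.trans h1) (by decide)
    obtain ⟨ℓ, hℓ, hne⟩ := this
    obtain ⟨x, hx⟩ := line_inter (hL.1 _ hℓ).1 hm.1 hne
    have hx' : x ∈ ℓ ∩ m := hx ▸ rfl
    exact ⟨x, key ℓ hℓ m hmL hne x hx'.1 hx'.2, hx'.2⟩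
  · have hnot : ¬ InGenPos (insert m L) := by
      intro hgp
      have hmem : insert m L ∈ genFamilies Ω := by
        refine ⟨?_, hgp⟩
        rintro ℓ (rfl | hℓ)
        · exact hm
        · exact hL.1 ℓ hℓ
      have hle : (insert m L).encard ≤ LiG Ω :=
        le_iSup₂ (f := fun (L : Set (Set P2)) (_ : L ∈ genFamilies Ω) => L.encard) _ hmem
      rw [Set.encard_insert_of_notMem hmL, hcard] at hle
      exact absurd hle (not_le.mpr (ENat.lt_add_one_iff hfin |>.mpr le_rfl))
    unfold InGenPos at hnot
    push Not at hnot
    obtain ⟨p, a, ha, b, hb, c, hc, hpa, hpb, hpc, hab, hac, hbc⟩ := hnot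
    rcases ha with rfl | ha
    · exact ⟨p, key b (hb.resolve_left hab.symm) c (hc.resolve_left hac.symm) hbc p hpb hpc, hpa⟩
    rcases hb with rfl | hb
    · exact ⟨p, key a ha c (hc.resolve_left hbc.symm) hac p hpa hpc, hpb⟩
    rcases hc with rfl | hc
    · exact ⟨p, key a ha b hb hab p hpa hpb, hpc⟩
    · rcases hL.2 p a ha b hb c hc hpa hpb hpc with h | h | h
      · exact absurd h hab
      · exact absurd h hac
      · exact absurd h hbc

lemma manyLines_subset {Ω : Set P2} (h4 : 4 ≤ LiG Ω) (hfin : LiG Ω ≠ ⊤)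
    {L : Set (Set P2)} (hL : L ∈ genFamilies Ω) (hcard : L.encard = LiG Ω) :
    manyLines Ω ⊆ crossings L := by
  intro v hv
  by_contra hvX
  have hLf : L.Finite := Set.encard_ne_top_iff.mp (hcard ▸ hfin)
  refine hv ?_
  have hsub : {m ∈ linesIn Ωᶜ | v ∈ m} ⊆
      ⋃ x ∈ crossings L, {m | IsLine m ∧ v ∈ m ∧ x ∈ m ∧ x ≠ v} := by
    rintro m ⟨hm, hvm⟩
    obtain ⟨x, hx, hxm⟩ := exists_crossing h4 hfin hL hcard hm
    exact Set.mem_biUnion hx ⟨hm.1, hvm, hxm, fun h => hvX (h ▸ hx)⟩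
  refine ((crossings_finite hLf).biUnion fun x _ => Set.Subsingleton.finite ?_).subset hsub
  rintro a ⟨ha, hva, hxa, hne⟩ b ⟨hb, hvb, hxb, -⟩
  exact line_eq_of_two_points ha hb hne hxa hxb hva hvb

lemma isVertex_of_manyLines {Ω : Set P2} (h4 : 4 ≤ LiG Ω) (hfin : LiG Ω ≠ ⊤)
    {L : Set (Set P2)} (hL : L ∈ genFamilies Ω) (hcard : L.encard = LiG Ω)
    {v : P2} (hv : v ∈ manyLines Ω) : IsVertex Ω L v := by
  obtain ⟨ℓ₁, h₁, ℓ₂, h₂, hne, hx⟩ := manyLines_subset h4 hfin hL hcard hv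
  refine ⟨ℓ₁, h₁, ℓ₂, h₂, hne, {m ∈ linesIn Ωᶜ | v ∈ m}, hv, fun ℓ hℓ => hℓ.1, ?_⟩
  rw [hx, Set.inter_eq_left]
  rintro _ rfl m hm
  exact hm.2

/-- Away from the points of `manyLines Ω` there are only finitely many lines in the complement. -/
lemma finite_lines_avoiding {Ω : Set P2} (h4 : 4 ≤ LiG Ω) (hfin : LiG Ω ≠ ⊤)
    {L : Set (Set P2)} (hL : L ∈ genFamilies Ω) (hcard : L.encard = LiG Ω) :
    {m ∈ linesIn Ωᶜ | ∀ v ∈ manyLines Ω, v ∉ m}.Finite := by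
  have hLf : L.Finite := Set.encard_ne_top_iff.mp (hcard ▸ hfin)
  have hsub : {m ∈ linesIn Ωᶜ | ∀ v ∈ manyLines Ω, v ∉ m} ⊆
      ⋃ x ∈ crossings L, {m | m ∈ linesIn Ωᶜ ∧ x ∈ m ∧ x ∉ manyLines Ω} := by
    rintro m ⟨hm, h⟩
    obtain ⟨x, hx, hxm⟩ := exists_crossing h4 hfin hL hcard hm
    exact Set.mem_biUnion hx ⟨hm, hxm, fun hxv => h x hxv hxm⟩
  refine ((crossings_finite hLf).biUnion fun x _ => ?_).subset hsub
  by_cases hx : x ∈ manyLines Ω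
  · exact Set.Finite.subset Set.finite_empty fun m hm => (hm.2.2 hx).elim
  · exact (Set.not_infinite.mp hx).subset fun m hm => ⟨hm.1, hm.2.1⟩

/-! ### Discrete groups of affine maps of `ℂ` -/

/-- A set `S` of affine maps `z ↦ μ z + c`, coded as pairs `(μ, c)`, closed under composition and
inversion and with only finitely many bounded translation parts for each `μ`, either consists of
isometries and contains a translation, or has a common fixed point `p`. -/
lemma affine_dichotomy (S : Set (ℂ × ℂ)) (h0 : ∀ x ∈ S, x.1 ≠ 0)
    (hmul : ∀ x ∈ S, ∀ y ∈ S, (x.1 * y.1, x.1 * y.2 + x.2) ∈ S)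
    (hinv : ∀ x ∈ S, (x.1⁻¹, -(x.1⁻¹ * x.2)) ∈ S)
    (hfin : ∀ (μ : ℂ) (R : ℝ), {c : ℂ | (μ, c) ∈ S ∧ ‖c‖ ≤ R}.Finite) :
    ((∀ x ∈ S, ‖x.1‖ = 1) ∧ ∃ c ≠ 0, ((1 : ℂ), c) ∈ S) ∨
      ∃ p : ℂ, ∀ x ∈ S, x.2 = (1 - x.1) * p := by
  by_cases hiso : ∀ x ∈ S, ‖x.1‖ = 1
  · by_cases htr : ∃ c ≠ 0, ((1 : ℂ), c) ∈ S
    · exact Or.inl ⟨hiso, htr⟩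
    · -- commutators are translations, hence trivial: the group is abelian
      right
      push Not at htr
      have htr' : ∀ c, ((1 : ℂ), c) ∈ S → c = 0 := fun c hc => by
        by_contra h
        exact htr c h hc
      by_cases hid : ∀ x ∈ S, x.1 = 1
      · refine ⟨0, fun x hx => ?_⟩
        rw [mul_zero]
        refine htr' _ ?_
        rw [← hid x hx]
        exact hx
      · push Not at hid
        obtain ⟨g, hg, hg1⟩ := hid
        refine ⟨g.2 / (1 - g.1), fun x hx => ?_⟩
        have hx0 := h0 x hx
        have hg0 := h0 g hg
        have hg1' : 1 - g.1 ≠ 0 := sub_ne_zero.mpr (Ne.symm hg1)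
        have hc := hmul _ (hmul _ hx _ hg) _ (hinv _ (hmul _ hg _ hx))
        have h1 : x.1 * g.1 * (g.1 * x.1)⁻¹ = 1 := by
          field_simp
        simp only [h1] at hc
        have h2 := htr' _ hc
        field_simp at h2 ⊢
        linear_combination h2
  · right
    push Not at hiso
    have hexp : ∃ g ∈ S, 1 < ‖g.1‖ := by
      obtain ⟨g, hg, hg1⟩ := hiso
      rcases lt_or_gt_of_ne hg1 with h | h
      · refine ⟨_, hinv g hg, ?_⟩
        rw [norm_inv]
        exact (one_lt_inv₀ (norm_pos_iff.mpr (h0 g hg))).mpr h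
      · exact ⟨g, hg, h⟩
    obtain ⟨g, hg, hg1⟩ := hexp
    have hg0 := h0 g hg
    have hg1' : 1 - g.1 ≠ 0 := by
      intro h
      rw [← sub_eq_zero.mp h, norm_one] at hg1
      exact lt_irrefl _ hg1
    refine ⟨g.2 / (1 - g.1), fun x hx => ?_⟩
    set p := g.2 / (1 - g.1) with hp
    have hgp : g.2 = (1 - g.1) * p := by
      rw [hp]
      field_simp
    by_contra hne
    set δ := x.2 - (1 - x.1) * p with hδ
    have hδ0 : δ ≠ 0 := sub_ne_zero.mpr hne
    -- the conjugates `g⁻ⁿ x gⁿ` have bounded translation parts and are pairwise distinct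
    have hconj : ∀ n : ℕ, (x.1, (1 - x.1) * p + (g.1⁻¹) ^ n * δ) ∈ S := by
      intro n
      induction n with
      | zero =>
        convert hx using 1
        ext1
        · rfl
        · simp [hδ]
      | succ n ih =>
        have := hmul _ (hmul _ (hinv g hg) _ ih) _ hg
        convert this using 1
        ext1
        · simp only
          field_simp
        · simp only [hgp, pow_succ]
          generalize (g.1⁻¹) ^ n = t
          field_simp
          ring
    have hinj : Function.Injective (fun n : ℕ => (1 - x.1) * p + (g.1⁻¹) ^ n * δ) := by
      intro a b hab
      simp only [add_right_inj, mul_eq_mul_right_iff, hδ0, or_false] at hab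
      have h1 : ‖g.1‖ ^ a = ‖g.1‖ ^ b := by
        rw [inv_pow, inv_pow, _root_.inv_inj] at hab
        rw [← norm_pow, hab, norm_pow]
      exact pow_right_injective₀ (by linarith) hg1.ne' h1
    refine Set.infinite_of_injective_forall_mem hinj
      (s := {c : ℂ | (x.1, c) ∈ S ∧ ‖c‖ ≤ ‖(1 - x.1) * p‖ + ‖δ‖}) ?_ (hfin _ _)
    intro n
    refine ⟨hconj n, (norm_add_le _ _).trans ?_⟩
    rw [norm_mul _ δ, norm_pow, norm_inv]
    gcongr
    refine mul_le_of_le_one_left (norm_nonneg _) (pow_le_one₀ (by positivity) ?_)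
    exact inv_le_one_of_one_le₀ hg1.le

lemma mat_conj_mul {P A B : Mat3} (hP : IsUnit P.det) :
    (P * A * P⁻¹) * (P * B * P⁻¹) = P * (A * B) * P⁻¹ := by
  have : P⁻¹ * P = 1 := Matrix.nonsing_inv_mul P hP
  calc _ = P * A * (P⁻¹ * P) * B * P⁻¹ := by simp only [Matrix.mul_assoc]
    _ = _ := by rw [this, Matrix.mul_one]; simp only [Matrix.mul_assoc]

lemma mat_conj_inj {P A B : Mat3} (hP : IsUnit P.det) (h : P * A * P⁻¹ = P * B * P⁻¹) : A = B := by
  have h1 : P⁻¹ * P = 1 := Matrix.nonsing_inv_mul P hP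
  have h2 : ∀ X : Mat3, P⁻¹ * (P * X * P⁻¹) * P = X := fun X => by
    calc _ = (P⁻¹ * P) * X * (P⁻¹ * P) := by simp only [Matrix.mul_assoc]
      _ = X := by rw [h1, Matrix.mul_one, Matrix.one_mul]
  rw [← h2 A, h, h2]

/-- The dichotomy of `affine_dichotomy` for a discrete group all of whose elements are induced by
conjugates of matrices `N μ c`, where `N` is a faithful representation or antirepresentation of the
affine group. -/
lemma group_dichotomy (Γ : Subgroup PSL3) (hΓ : DiscreteTopology ↥Γ)
    (Γ₁ : Subgroup PSL3) (hle : Γ₁ ≤ Γ) (P : Mat3) (hP : IsUnit P.det)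
    (N : ℂ → ℂ → Mat3)
    (hNmul : (∀ μ c μ' c', N μ c * N μ' c' = N (μ * μ') (μ * c' + c)) ∨
      (∀ μ c μ' c', N μ' c' * N μ c = N (μ * μ') (μ * c' + c)))
    (hNone : N 1 0 = 1) (hN22 : ∀ μ c, N μ c 2 2 = 1) (hNdet : ∀ μ c, (N μ c).det = μ)
    (hNinj : ∀ μ c μ' c', N μ c = N μ' c' → μ = μ' ∧ c = c')
    (hNcont : ∀ μ, Continuous (N μ))
    (hrep : ∀ γ ∈ Γ₁, ∃ μ c, MatRep γ (P * N μ c * P⁻¹)) :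
    ((∀ γ ∈ Γ₁, ∃ μ c, ‖μ‖ = 1 ∧ MatRep γ (P * N μ c * P⁻¹)) ∧
        {γ | γ ∈ Γ₁ ∧ ∃ c, MatRep γ (P * N 1 c * P⁻¹)}.Infinite) ∨
      ∃ p : ℂ, ∀ γ ∈ Γ₁, ∃ μ, MatRep γ (P * N μ ((1 - μ) * p) * P⁻¹) := by
  have huniq : ∀ γ μ c μ' c', MatRep γ (P * N μ c * P⁻¹) → MatRep γ (P * N μ' c' * P⁻¹) →
      μ = μ' ∧ c = c' := by
    intro γ μ c μ' c' h h'
    obtain ⟨s, hs⟩ := h.unique h'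
    have h1 : N μ' c' = s • N μ c := by
      refine mat_conj_inj hP ?_
      rw [hs, Matrix.mul_smul, Matrix.smul_mul]
    have h2 := congrFun (congrFun h1 2) 2
    rw [Matrix.smul_apply, hN22, hN22, smul_eq_mul, mul_one] at h2
    rw [← h2, one_smul] at h1
    exact hNinj _ _ _ _ h1.symm
  let S : Set (ℂ × ℂ) := {x | ∃ γ ∈ Γ₁, MatRep γ (P * N x.1 x.2 * P⁻¹)}
  have hS0 : ∀ x ∈ S, x.1 ≠ 0 := by
    rintro x ⟨γ, -, h⟩ hx
    refine h.det_ne ?_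
    rw [Matrix.det_mul, Matrix.det_mul, hNdet, hx, mul_zero, zero_mul]
  have hSmul : ∀ x ∈ S, ∀ y ∈ S, (x.1 * y.1, x.1 * y.2 + x.2) ∈ S := by
    rintro x ⟨γ, hγ, h⟩ y ⟨γ', hγ', h'⟩
    rcases hNmul with hN | hN
    · refine ⟨γ * γ', Γ₁.mul_mem hγ hγ', ?_⟩
      have := h.mul h'
      rwa [mat_conj_mul hP, hN] at this
    · refine ⟨γ' * γ, Γ₁.mul_mem hγ' hγ, ?_⟩
      have := h'.mul h
      rwa [mat_conj_mul hP, hN] at this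
  have hSinv : ∀ x ∈ S, (x.1⁻¹, -(x.1⁻¹ * x.2)) ∈ S := by
    rintro x hx
    have hx0 := hS0 x hx
    obtain ⟨γ, hγ, h⟩ := hx
    refine ⟨γ⁻¹, Γ₁.inv_mem hγ, h.inv ?_⟩
    rw [mat_conj_mul hP]
    have : N x.1 x.2 * N x.1⁻¹ (-(x.1⁻¹ * x.2)) = 1 := by
      rcases hNmul with hN | hN
      · rw [hN, ← hNone]
        congr 1
        · field_simp
        · field_simp
          ring
      · rw [hN, ← hNone]
        congr 1
        · field_simp
        · ring
    rw [this, Matrix.mul_one, Matrix.mul_nonsing_inv P hP]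
  have hSfin : ∀ (μ : ℂ) (R : ℝ), {c : ℂ | (μ, c) ∈ S ∧ ‖c‖ ≤ R}.Finite := by
    intro μ R
    by_cases hμ : μ = 0
    · refine Set.Finite.subset Set.finite_empty ?_
      rintro c ⟨hc, -⟩
      exact (hS0 _ hc hμ).elim
    have hfin := finite_of_compact_rep Γ hΓ
      ((fun c => P * N μ c * P⁻¹) '' Metric.closedBall 0 R)
      ((isCompact_closedBall _ _).image
        ((continuous_const.mul (hNcont μ)).mul continuous_const)) (by
        rintro _ ⟨c, -, rfl⟩
        rw [Matrix.det_mul, Matrix.det_mul, hNdet]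
        exact mul_ne_zero (mul_ne_zero hP.ne_zero hμ)
          (Matrix.isUnit_nonsing_inv_det P hP).ne_zero)
    have hch : ∀ c : {c : ℂ | (μ, c) ∈ S ∧ ‖c‖ ≤ R}, ∃ γ ∈ Γ₁,
        MatRep γ (P * N μ c * P⁻¹) := fun c => c.2.1
    choose f hf hfr using hch
    have : Finite {γ : PSL3 | γ ∈ Γ ∧ ∃ M ∈ (fun c => P * N μ c * P⁻¹) '' Metric.closedBall 0 R,
        MatRep γ M} := hfin
    refine Set.finite_coe_iff.mp (Finite.of_injective (β := {γ : PSL3 | γ ∈ Γ ∧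
      ∃ M ∈ (fun c => P * N μ c * P⁻¹) '' Metric.closedBall 0 R, MatRep γ M})
      (fun c => ⟨f c, hle (hf c), _, ⟨c, by simpa using c.2.2, rfl⟩, hfr c⟩) ?_)
    intro a b hab
    have hab' : f a = f b := congrArg Subtype.val hab
    exact Subtype.ext (huniq _ _ _ _ _ (hfr a) (hab' ▸ hfr b)).2
  rcases affine_dichotomy S hS0 hSmul hSinv hSfin with ⟨hiso, c, hc0, hc⟩ | ⟨p, hp⟩
  · left
    constructor
    · intro γ hγ
      obtain ⟨μ, c, h⟩ := hrep γ hγ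
      exact ⟨μ, c, hiso (μ, c) ⟨γ, hγ, h⟩, h⟩
    · have hn : ∀ n : ℕ, ((1 : ℂ), (n + 1 : ℂ) * c) ∈ S := by
        intro n
        induction n with
        | zero => simpa using hc
        | succ n ih =>
          have := hSmul _ ih _ hc
          convert this using 1
          ext1
          · simp
          · push_cast
            ring
      choose f hf hfr using hn
      refine Set.infinite_of_injective_forall_mem (f := f) ?_ fun n => ⟨hf n, _, hfr n⟩
      intro a b hab
      have := (huniq _ _ _ _ _ (hfr a) (hab ▸ hfr b)).2
      simpa [hc0] using this
  · right
    refine ⟨p, fun γ hγ => ?_⟩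
    obtain ⟨μ, c, h⟩ := hrep γ hγ
    have := hp (μ, c) ⟨γ, hγ, h⟩
    simp only at this
    exact ⟨μ, this ▸ h⟩

/-! ### Groups of finite index with few limit lines -/

/-- A subgroup of finite index has a finite set of coset representatives. -/
lemma exists_coset_reps (Γ Γ₁ : Subgroup PSL3) (hfi : Γ₁.relIndex Γ ≠ 0) :
    ∃ F : Set PSL3, F.Finite ∧ F ⊆ Γ ∧ ∀ γ ∈ Γ, ∃ f ∈ F, ∃ γ₁ ∈ Γ₁, γ = f * γ₁ := by
  have : (Γ₁.subgroupOf Γ).FiniteIndex := ⟨hfi⟩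
  have : Finite (Γ ⧸ Γ₁.subgroupOf Γ) := Subgroup.finite_quotient_of_finiteIndex
  refine ⟨Set.range fun q : Γ ⧸ Γ₁.subgroupOf Γ => (q.out : PSL3), Set.finite_range _, ?_, ?_⟩
  · rintro _ ⟨q, rfl⟩
    exact q.out.2
  · intro γ hγ
    obtain ⟨h, hh⟩ := QuotientGroup.mk_out_eq_mul (Γ₁.subgroupOf Γ) ⟨γ, hγ⟩
    refine ⟨_, ⟨QuotientGroup.mk ⟨γ, hγ⟩, rfl⟩, ((h : Γ) : PSL3)⁻¹,
      Γ₁.inv_mem (Subgroup.mem_subgroupOf.mp h.2), ?_⟩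
    simp only [hh]
    simp

lemma finrank_lt_of_ne_top {W : Submodule ℂ V3} (h : W ≠ ⊤) : Module.finrank ℂ W ≤ 2 := by
  have := Submodule.finrank_lt h
  rw [finrank_V3] at this
  omega

lemma isClosed_submodule_le (W : Submodule ℂ V3) : IsClosed {p : P2 | p.submodule ≤ W} := by
  rw [← isOpenQuotientMap_mk.isQuotientMap.isClosed_preimage]
  have : (fun v : {v : V3 // v ≠ 0} => (Projectivization.mk ℂ v.1 v.2 : P2)) ⁻¹'
      {p : P2 | p.submodule ≤ W} = Subtype.val ⁻¹' (W : Set V3) := by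
    ext v
    exact mk_submodule_le v.1 v.2 W
  rw [this]
  exact (Submodule.closed_of_finiteDimensional W).preimage continuous_subtype_val

/-- If, in the coordinates given by `P`, the elements of a finite index subgroup `Γ₁` of `Γ` are
induced by matrices from a compact set `𝒩` whose singular members degenerate only along two
subspaces `C₁`, `C₂`, each point of which has infinite isotropy, then `ℙ²_ℂ ∖ Ω` lies in the union
of the two subspaces and thus contains at most two lines. -/
lemma li_le_two (Γ : Subgroup PSL3) (hΓ : DiscreteTopology ↥Γ)
    (Γ₁ : Subgroup PSL3) (hle : Γ₁ ≤ Γ) (hfi : Γ₁.relIndex Γ ≠ 0)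
    (Ω : Set P2) (hΩ : Ω = eqSet Γ ∨ Ω = kulkarniRegion Γ ∨ MaxDisc Γ Ω)
    (P : Mat3) (hP : IsUnit P.det) (C₁ C₂ : Submodule ℂ V3) (hC₁ : C₁ ≠ ⊤) (hC₂ : C₂ ≠ ⊤)
    (𝒩 : Set Mat3) (h𝒩 : IsCompact 𝒩)
    (hrep : ∀ γ ∈ Γ₁, ∃ N ∈ 𝒩, MatRep γ (P * N * P⁻¹))
    (hker : ∀ N ∈ 𝒩, ∀ x, x ∉ C₁ → x ∉ C₂ → N *ᵥ x ≠ 0)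
    (hsing : ∀ N ∈ 𝒩, N.det = 0 → ∀ x, x ∉ C₁ → x ∉ C₂ → N *ᵥ x ∈ C₁ ∨ N *ᵥ x ∈ C₂)
    (hiso : ∀ x, x ∈ C₁ ∨ x ∈ C₂ →
      {γ | γ ∈ Γ₁ ∧ ∃ N, MatRep γ (P * N * P⁻¹) ∧ ∃ s : ℂ, N *ᵥ x = s • x}.Infinite) :
    Li Ω ≤ 2 := by
  have hPP : P⁻¹ * P = 1 := Matrix.nonsing_inv_mul P hP
  have hPP' : P * P⁻¹ = 1 := Matrix.mul_nonsing_inv P hP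
  let W : Submodule ℂ V3 → Submodule ℂ V3 := fun C => C.comap (Matrix.toLin' P⁻¹)
  have hW : ∀ C v, v ∈ W C ↔ P⁻¹ *ᵥ v ∈ C := fun C v => by
    simp [W]
  have hWtop : ∀ C, C ≠ ⊤ → W C ≠ ⊤ := by
    intro C hC h
    refine hC (eq_top_iff.mpr fun x _ => ?_)
    have : P *ᵥ x ∈ W C := h ▸ Submodule.mem_top
    rw [hW, Matrix.mulVec_mulVec, hPP, Matrix.one_mulVec] at this
    exact this
  let Z : Set P2 := {p | p.submodule ≤ W C₁} ∪ {p | p.submodule ≤ W C₂}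
  have hZ : ∀ v hv, Projectivization.mk ℂ v hv ∈ Z ↔ P⁻¹ *ᵥ v ∈ C₁ ∨ P⁻¹ *ᵥ v ∈ C₂ := by
    intro v hv
    simp only [Z, Set.mem_union, Set.mem_ofPred_eq, mk_submodule_le, hW]
  obtain ⟨F, hF, hFΓ, hcos⟩ := exists_coset_reps Γ Γ₁ hfi
  have hconj : ∀ (N : Mat3) (v : V3), (P * N * P⁻¹) *ᵥ v = P *ᵥ (N *ᵥ (P⁻¹ *ᵥ v)) := by
    intro N v
    simp only [Matrix.mulVec_mulVec, Matrix.mul_assoc]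
  have hback : ∀ (N : Mat3) (v : V3), P⁻¹ *ᵥ ((P * N * P⁻¹) *ᵥ v) = N *ᵥ (P⁻¹ *ᵥ v) := by
    intro N v
    rw [hconj, Matrix.mulVec_mulVec, hPP, Matrix.one_mulVec]
  have hk : ∀ M ∈ (fun N => P * N * P⁻¹) '' 𝒩, ∀ v hv, Projectivization.mk ℂ v hv ∉ Z →
      M *ᵥ v ≠ 0 := by
    rintro _ ⟨N, hN, rfl⟩ v hv hvZ h0
    rw [hZ, not_or] at hvZ
    refine hker N hN _ hvZ.1 hvZ.2 ?_
    rw [← hback]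
    simp only at h0
    rw [h0, Matrix.mulVec_zero]
  have hsub : Ωᶜ ⊆ Z := by
    refine compl_subset_of_dynamics Γ hΓ Γ₁ hle F hF hFΓ hcos Z
      ((isClosed_submodule_le _).union (isClosed_submodule_le _)) ((fun N => P * N * P⁻¹) '' 𝒩)
      (h𝒩.image (by fun_prop)) ?_ hk ?_ ?_ Ω hΩ
    · intro γ hγ
      obtain ⟨N, hN, h⟩ := hrep γ hγ
      exact ⟨_, ⟨N, hN, rfl⟩, h⟩
    · rintro _ ⟨N, hN, rfl⟩ hdet p hp
      induction p using Projectivization.ind with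
      | h v hv =>
        rw [mact_mk _ v hv (hk _ ⟨N, hN, rfl⟩ v hv hp), hZ, hback]
        rw [hZ, not_or] at hp
        refine hsing N hN ?_ _ hp.1 hp.2
        rw [Matrix.det_mul, Matrix.det_mul] at hdet
        simpa [hP.ne_zero, (Matrix.isUnit_nonsing_inv_det P hP).ne_zero] using hdet
    · intro z hz
      induction z using Projectivization.ind with
      | h v hv =>
        rw [hZ] at hz
        refine (hiso _ hz).mono ?_
        rintro γ ⟨hγ, N, hN, s, hs⟩
        refine ⟨hle hγ, ?_⟩
        rw [hN.pact_mk, Projectivization.mk_eq_mk_iff']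
        refine ⟨s, ?_⟩
        rw [hconj, hs, Matrix.mulVec_smul, Matrix.mulVec_mulVec, hPP', Matrix.one_mulVec]
  have hlines : linesIn Ωᶜ ⊆ {{p | p.submodule ≤ W C₁}, {p | p.submodule ≤ W C₂}} := by
    rintro ℓ ⟨⟨V, hV, rfl⟩, hℓ⟩
    have hcov : (V : Set V3) ⊆ (W C₁ : Set V3) ∪ (W C₂ : Set V3) := by
      intro v hv
      by_cases hv0 : v = 0
      · left
        rw [hv0]
        exact (W C₁).zero_mem
      · have := hsub (hℓ ((mk_submodule_le v hv0 V).mpr hv))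
        simpa only [Z, Set.mem_union, Set.mem_ofPred_eq, mk_submodule_le, SetLike.mem_coe] using this
    have heq : ∀ C, C ≠ ⊤ → V ≤ W C → V = W C := by
      intro C hC h
      refine Submodule.eq_of_le_of_finrank_le h ?_
      rw [hV]
      exact finrank_lt_of_ne_top (hWtop C hC)
    have hor : V ≤ W C₁ ∨ V ≤ W C₂ := by
      by_contra hno
      rw [not_or, SetLike.not_le_iff_exists, SetLike.not_le_iff_exists] at hno
      obtain ⟨⟨a, ha, ha1⟩, b, hb, hb2⟩ := hno
      have ha2 : a ∈ W C₂ := (hcov ha).resolve_left ha1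
      have hb1 : b ∈ W C₁ := (hcov hb).resolve_right hb2
      rcases hcov (V.add_mem ha hb) with h | h
      · exact ha1 ((Submodule.add_mem_iff_left _ hb1).mp h)
      · exact hb2 ((Submodule.add_mem_iff_right _ ha2).mp h)
    rcases hor with h | h
    · left
      rw [heq C₁ hC₁ h]
    · right
      rw [Set.mem_singleton_iff, heq C₂ hC₂ h]
  refine (Set.encard_le_encard hlines).trans ((Set.encard_insert_le _ _).trans ?_)
  rw [Set.encard_singleton]
  norm_num

lemma li_le_two_of_finite (Γ : Subgroup PSL3) (hΓ : DiscreteTopology ↥Γ) (hfin : Finite Γ)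
    (Ω : Set P2) (hΩ : Ω = eqSet Γ ∨ Ω = kulkarniRegion Γ ∨ MaxDisc Γ Ω) : Li Ω ≤ 2 := by
  have hsub : Ωᶜ ⊆ ∅ := by
    refine compl_subset_of_dynamics Γ hΓ ⊥ bot_le Γ hfin subset_rfl ?_ ∅ isClosed_empty {1}
      isCompact_singleton ?_ ?_ ?_ ?_ Ω hΩ
    · intro γ hγ
      exact ⟨γ, hγ, 1, rfl, (mul_one _).symm⟩
    · intro γ hγ
      rw [Subgroup.mem_bot] at hγ
      exact ⟨1, rfl, 1, hγ ▸ rfl, 1, one_ne_zero, by simp⟩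
    · rintro _ rfl v hv -
      rwa [Matrix.one_mulVec]
    · rintro _ rfl h
      simp at h
    · rintro z ⟨⟩
  have : linesIn Ωᶜ = ∅ := by
    rw [Set.eq_empty_iff_forall_notMem]
    rintro ℓ ⟨⟨V, hV, rfl⟩, hℓ⟩
    have hV0 : V ≠ ⊥ := by
      rintro rfl
      simp at hV
    obtain ⟨v, hv, hv0⟩ := Submodule.exists_mem_ne_zero_of_ne_bot hV0
    exact hsub (hℓ ((mk_submodule_le v hv0 V).mpr hv))
  rw [Li, this]
  simp

/-! ### The two affine normal forms -/

/-- The affine map `z ↦ μ z + c` acting linearly on the first two coordinates, the third being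
fixed. -/
def NA (μ c : ℂ) : Mat3 := !![μ, c, 0; 0, 1, 0; 0, 0, 1]

/-- The transpose of `NA μ c`; it fixes pointwise the plane `x₀ = 0`. -/
def NB (μ c : ℂ) : Mat3 := !![μ, 0, 0; c, 1, 0; 0, 0, 1]

/-- The plane `xᵢ = 0`. -/
def coordPlane (i : Fin 3) : Submodule ℂ V3 := LinearMap.ker (LinearMap.proj i)

lemma mem_coordPlane {i : Fin 3} {x : V3} : x ∈ coordPlane i ↔ x i = 0 := by
  simp [coordPlane]

lemma coordPlane_ne_top (i : Fin 3) : coordPlane i ≠ ⊤ := by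
  intro h
  have : (Pi.single i 1 : V3) ∈ coordPlane i := h ▸ Submodule.mem_top
  rw [mem_coordPlane] at this
  simp at this

/-- The pairs in the closed unit bidisc one of whose entries has modulus one: a compact set of
normalised homogeneous coordinates. -/
def unitPairs : Set (ℂ × ℂ) := {x | ‖x.1‖ ≤ 1 ∧ ‖x.2‖ ≤ 1 ∧ (‖x.1‖ = 1 ∨ ‖x.2‖ = 1)}

lemma isCompact_unitPairs : IsCompact unitPairs := by
  refine (isCompact_closedBall (0 : ℂ × ℂ) 1).of_isClosed_subset ?_ ?_
  · have h1 : Continuous fun x : ℂ × ℂ => ‖x.1‖ := by fun_prop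
    have h2 : Continuous fun x : ℂ × ℂ => ‖x.2‖ := by fun_prop
    exact (isClosed_le h1 continuous_const).inter ((isClosed_le h2 continuous_const).inter
      ((isClosed_eq h1 continuous_const).union (isClosed_eq h2 continuous_const)))
  · rintro x ⟨h1, h2, -⟩
    rw [mem_closedBall_zero_iff]
    exact max_le h1 h2

lemma exists_unitPair (c : ℂ) : ∃ t : ℂ, t ≠ 0 ∧ (t, t * c) ∈ unitPairs := by
  by_cases h : ‖c‖ ≤ 1
  · exact ⟨1, one_ne_zero, by simp, by simpa using h, by simp⟩
  · push Not at h
    have hc : c ≠ 0 := by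
      rintro rfl
      simp at h
      linarith
    refine ⟨c⁻¹, inv_ne_zero hc, ?_, ?_, ?_⟩
    · rw [norm_inv]
      exact inv_le_one_of_one_le₀ h.le
    · simp [hc]
    · simp [hc]

lemma unitPairs_ne {x : ℂ × ℂ} (hx : x ∈ unitPairs) : x.1 ≠ 0 ∨ x.2 ≠ 0 := by
  rcases hx.2.2 with h | h
  · left
    rintro h0
    simp [h0] at h
  · right
    rintro h0
    simp [h0] at h

lemma MatRep.conj_smul {γ : PSL3} {P N : Mat3} (h : MatRep γ (P * N * P⁻¹)) {t : ℂ} (ht : t ≠ 0) :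
    MatRep γ (P * (t • N) * P⁻¹) := by
  have := h.smul ht
  rwa [← Matrix.smul_mul, ← Matrix.mul_smul] at this

lemma ne_zero_of_apply {x : V3} (i : Fin 3) (h : x i ≠ 0) : x ≠ 0 := fun h0 => h (by simp [h0])

/-- When every element of `Γ₁` is a homothety with axis `x₀ = 0`, the complement of `Ω` lies in the
axis together with the centre `x₁ = x₂ = 0`. -/
lemma li_le_two_diag (Γ : Subgroup PSL3) (hΓ : DiscreteTopology ↥Γ)
    (Γ₁ : Subgroup PSL3) (hle : Γ₁ ≤ Γ) (hfi : Γ₁.relIndex Γ ≠ 0)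
    (Ω : Set P2) (hΩ : Ω = eqSet Γ ∨ Ω = kulkarniRegion Γ ∨ MaxDisc Γ Ω)
    (P : Mat3) (hP : IsUnit P.det) (hinf : (Γ₁ : Set PSL3).Infinite)
    (hrep : ∀ γ ∈ Γ₁, ∃ μ, MatRep γ (P * NA μ 0 * P⁻¹)) : Li Ω ≤ 2 := by
  refine li_le_two Γ hΓ Γ₁ hle hfi Ω hΩ P hP (coordPlane 0) (coordPlane 1 ⊓ coordPlane 2)
    (coordPlane_ne_top 0) (fun h => coordPlane_ne_top 1 (eq_top_mono inf_le_left h))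
    ((fun x : ℂ × ℂ => !![x.2, 0, 0; 0, x.1, 0; 0, 0, x.1]) '' unitPairs)
    (isCompact_unitPairs.image ?_) ?_ ?_ ?_ ?_
  · refine continuous_matrix fun i j => ?_
    fin_cases i <;> fin_cases j <;> simp <;> fun_prop
  · intro γ hγ
    obtain ⟨μ, h⟩ := hrep γ hγ
    obtain ⟨t, ht, hp⟩ := exists_unitPair μ
    refine ⟨_, ⟨_, hp, rfl⟩, ?_⟩
    convert h.conj_smul ht using 3
    ext i j
    fin_cases i <;> fin_cases j <;> simp [NA]
  · rintro _ ⟨y, hy, rfl⟩ x h1 h2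
    simp only [Submodule.mem_inf, mem_coordPlane, not_and_or] at h1 h2
    rcases unitPairs_ne hy with h | h
    · rcases h2 with h2 | h2
      · exact ne_zero_of_apply 1 (by simp [vecHead, vecTail, h, h2])
      · exact ne_zero_of_apply 2 (by simp [vecHead, vecTail, h, h2])
    · exact ne_zero_of_apply 0 (by simp [vecHead, vecTail, h, h1])
  · rintro _ ⟨y, hy, rfl⟩ hdet x - -
    simp only [Matrix.det_fin_three] at hdet
    simp at hdet
    simp only [Submodule.mem_inf, mem_coordPlane]
    rcases hdet with h | h
    · left
      simp [vecHead, vecTail, h]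
    · right
      simp [vecHead, vecTail, h]
  · intro x hx
    simp only [Submodule.mem_inf, mem_coordPlane] at hx
    refine hinf.mono fun γ hγ => ?_
    obtain ⟨μ, h⟩ := hrep γ hγ
    refine ⟨hγ, _, h, ?_⟩
    rcases hx with hx | hx
    · refine ⟨1, ?_⟩
      ext i
      fin_cases i <;> simp [vecHead, vecTail, hx, NA]
    · refine ⟨μ, ?_⟩
      ext i
      fin_cases i <;> simp [vecHead, vecTail, hx, NA]

/-- The isometric case for `NA`: the complement of `Ω` lies in the line `x₁ = 0`, which the
infinitely many translations fix pointwise. -/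
lemma li_le_two_transA (Γ : Subgroup PSL3) (hΓ : DiscreteTopology ↥Γ)
    (Γ₁ : Subgroup PSL3) (hle : Γ₁ ≤ Γ) (hfi : Γ₁.relIndex Γ ≠ 0)
    (Ω : Set P2) (hΩ : Ω = eqSet Γ ∨ Ω = kulkarniRegion Γ ∨ MaxDisc Γ Ω)
    (P : Mat3) (hP : IsUnit P.det)
    (hinf : {γ | γ ∈ Γ₁ ∧ ∃ c, MatRep γ (P * NA 1 c * P⁻¹)}.Infinite)
    (hrep : ∀ γ ∈ Γ₁, ∃ μ c, ‖μ‖ = 1 ∧ MatRep γ (P * NA μ c * P⁻¹)) : Li Ω ≤ 2 := by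
  refine li_le_two Γ hΓ Γ₁ hle hfi Ω hΩ P hP (coordPlane 1) (coordPlane 1)
    (coordPlane_ne_top 1) (coordPlane_ne_top 1)
    ((fun x : ℂ × (ℂ × ℂ) => !![x.2.1 * x.1, x.2.2, 0; 0, x.2.1, 0; 0, 0, x.2.1]) ''
      (Metric.sphere 0 1 ×ˢ unitPairs))
    (((isCompact_sphere _ _).prod isCompact_unitPairs).image ?_) ?_ ?_ ?_ ?_
  · refine continuous_matrix fun i j => ?_
    fin_cases i <;> fin_cases j <;> simp <;> fun_prop
  · intro γ hγ
    obtain ⟨μ, c, hμ, h⟩ := hrep γ hγ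
    obtain ⟨t, ht, hp⟩ := exists_unitPair c
    refine ⟨_, ⟨(μ, _), ⟨by simpa using hμ, hp⟩, rfl⟩, ?_⟩
    convert h.conj_smul ht using 3
    ext i j
    fin_cases i <;> fin_cases j <;> simp [NA]
  · rintro _ ⟨⟨μ, y⟩, ⟨hμ, hy⟩, rfl⟩ x h1 -
    simp only [mem_coordPlane] at h1
    by_cases h : y.1 = 0
    · exact ne_zero_of_apply 0 (by
        simp [vecHead, vecTail, h, h1, (unitPairs_ne hy).resolve_left (not_not.mpr h)])
    · exact ne_zero_of_apply 1 (by simp [vecHead, vecTail, h, h1])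
  · rintro _ ⟨⟨μ, y⟩, ⟨hμ, hy⟩, rfl⟩ hdet x - -
    have hμ0 : μ ≠ 0 := by
      rintro rfl
      simp at hμ
    simp only [Matrix.det_fin_three] at hdet
    simp [hμ0] at hdet
    simp [mem_coordPlane, vecHead, vecTail, hdet]
  · intro x hx
    simp only [mem_coordPlane, or_self] at hx
    refine hinf.mono ?_
    rintro γ ⟨hγ, c, h⟩
    refine ⟨hγ, _, h, 1, ?_⟩
    ext i
    fin_cases i <;> simp [vecHead, vecTail, hx, NA]

/-- The isometric case for `NB`: the complement of `Ω` lies in the line `x₀ = 0`, which every element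
of `Γ₁` fixes pointwise. -/
lemma li_le_two_transB (Γ : Subgroup PSL3) (hΓ : DiscreteTopology ↥Γ)
    (Γ₁ : Subgroup PSL3) (hle : Γ₁ ≤ Γ) (hfi : Γ₁.relIndex Γ ≠ 0)
    (Ω : Set P2) (hΩ : Ω = eqSet Γ ∨ Ω = kulkarniRegion Γ ∨ MaxDisc Γ Ω)
    (P : Mat3) (hP : IsUnit P.det) (hinf : (Γ₁ : Set PSL3).Infinite)
    (hrep : ∀ γ ∈ Γ₁, ∃ μ c, ‖μ‖ = 1 ∧ MatRep γ (P * NB μ c * P⁻¹)) : Li Ω ≤ 2 := by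
  refine li_le_two Γ hΓ Γ₁ hle hfi Ω hΩ P hP (coordPlane 0) (coordPlane 0)
    (coordPlane_ne_top 0) (coordPlane_ne_top 0)
    ((fun x : ℂ × (ℂ × ℂ) => !![x.2.1 * x.1, 0, 0; x.2.2, x.2.1, 0; 0, 0, x.2.1]) ''
      (Metric.sphere 0 1 ×ˢ unitPairs))
    (((isCompact_sphere _ _).prod isCompact_unitPairs).image ?_) ?_ ?_ ?_ ?_
  · refine continuous_matrix fun i j => ?_
    fin_cases i <;> fin_cases j <;> simp <;> fun_prop
  · intro γ hγ
    obtain ⟨μ, c, hμ, h⟩ := hrep γ hγ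
    obtain ⟨t, ht, hp⟩ := exists_unitPair c
    refine ⟨_, ⟨(μ, _), ⟨by simpa using hμ, hp⟩, rfl⟩, ?_⟩
    convert h.conj_smul ht using 3
    ext i j
    fin_cases i <;> fin_cases j <;> simp [NB]
  · rintro _ ⟨⟨μ, y⟩, ⟨hμ, hy⟩, rfl⟩ x h1 -
    have hμ0 : μ ≠ 0 := by
      rintro rfl
      simp at hμ
    simp only [mem_coordPlane] at h1
    by_cases h : y.1 = 0
    · exact ne_zero_of_apply 1 (by
        simp [vecHead, vecTail, h, h1, (unitPairs_ne hy).resolve_left (not_not.mpr h)])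
    · exact ne_zero_of_apply 0 (by simp [vecHead, vecTail, h, h1, hμ0])
  · rintro _ ⟨⟨μ, y⟩, ⟨hμ, hy⟩, rfl⟩ hdet x - -
    have hμ0 : μ ≠ 0 := by
      rintro rfl
      simp at hμ
    simp only [Matrix.det_fin_three] at hdet
    simp [hμ0] at hdet
    simp [mem_coordPlane, vecHead, vecTail, hdet]
  · intro x hx
    simp only [mem_coordPlane, or_self] at hx
    refine hinf.mono fun γ hγ => ?_
    obtain ⟨μ, c, -, h⟩ := hrep γ hγ
    refine ⟨hγ, _, h, 1, ?_⟩
    ext i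
    fin_cases i <;> simp [vecHead, vecTail, hx, NB]

lemma conj_change {P Q N D : Mat3} (hQ : IsUnit Q.det) (h : N * Q = Q * D) :
    P * N * P⁻¹ = (P * Q) * D * (P * Q)⁻¹ := by
  rw [Matrix.mul_inv_rev]
  calc P * N * P⁻¹ = P * (N * (Q * Q⁻¹)) * P⁻¹ := by
        rw [Matrix.mul_nonsing_inv Q hQ, Matrix.mul_one]
    _ = P * (N * Q) * Q⁻¹ * P⁻¹ := by simp only [Matrix.mul_assoc]
    _ = _ := by rw [h]; simp only [Matrix.mul_assoc]

/-- A common fixed point of the affine maps allows all matrices to be diagonalised at once, which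
reduces the second case of the dichotomy to `li_le_two_diag`. -/
lemma li_le_two_A (Γ : Subgroup PSL3) (hΓ : DiscreteTopology ↥Γ)
    (Γ₁ : Subgroup PSL3) (hle : Γ₁ ≤ Γ) (hfi : Γ₁.relIndex Γ ≠ 0)
    (Ω : Set P2) (hΩ : Ω = eqSet Γ ∨ Ω = kulkarniRegion Γ ∨ MaxDisc Γ Ω)
    (P : Mat3) (hP : IsUnit P.det) (hinf : (Γ₁ : Set PSL3).Infinite)
    (hrep : ∀ γ ∈ Γ₁, ∃ μ c, MatRep γ (P * NA μ c * P⁻¹)) : Li Ω ≤ 2 := by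
  have hmul : ∀ μ c μ' c', NA μ c * NA μ' c' = NA (μ * μ') (μ * c' + c) := by
    intro μ c μ' c'
    ext i j
    fin_cases i <;> fin_cases j <;> simp [NA, Matrix.mul_apply, Fin.sum_univ_three]
  have hone : NA 1 0 = 1 := by
    ext i j
    fin_cases i <;> fin_cases j <;> simp [NA]
  have hdet : ∀ μ c, (NA μ c).det = μ := by
    intro μ c
    simp [NA, Matrix.det_fin_three]
  have hcont : ∀ μ, Continuous (NA μ) := by
    intro μ
    refine continuous_matrix fun i j => ?_
    fin_cases i <;> fin_cases j <;> simp [NA] <;> fun_prop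
  rcases group_dichotomy Γ hΓ Γ₁ hle P hP NA (Or.inl hmul) hone (fun μ c => by simp [NA]) hdet
    (fun μ c μ' c' h => ⟨congrFun (congrFun h 0) 0, congrFun (congrFun h 0) 1⟩) hcont hrep with
    ⟨h1, h2⟩ | ⟨p, h⟩
  · exact li_le_two_transA Γ hΓ Γ₁ hle hfi Ω hΩ P hP h2 h1
  · have hQ : IsUnit (!![1, p, 0; 0, 1, 0; 0, 0, 1] : Mat3).det := by
      simp [Matrix.det_fin_three]
    refine li_le_two_diag Γ hΓ Γ₁ hle hfi Ω hΩ (P * !![1, p, 0; 0, 1, 0; 0, 0, 1])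
      (by rw [Matrix.det_mul]; exact hP.mul hQ) hinf fun γ hγ => ?_
    obtain ⟨μ, hμ⟩ := h γ hγ
    refine ⟨μ, ?_⟩
    rw [← conj_change hQ (N := NA μ ((1 - μ) * p))]
    · exact hμ
    · ext i j
      fin_cases i <;> fin_cases j <;> simp [NA, Matrix.mul_apply, Fin.sum_univ_three] <;> ring

/-- The analogue of `li_le_two_A` for `NB`, an antirepresentation of the affine group. -/
lemma li_le_two_B (Γ : Subgroup PSL3) (hΓ : DiscreteTopology ↥Γ)
    (Γ₁ : Subgroup PSL3) (hle : Γ₁ ≤ Γ) (hfi : Γ₁.relIndex Γ ≠ 0)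
    (Ω : Set P2) (hΩ : Ω = eqSet Γ ∨ Ω = kulkarniRegion Γ ∨ MaxDisc Γ Ω)
    (P : Mat3) (hP : IsUnit P.det) (hinf : (Γ₁ : Set PSL3).Infinite)
    (hrep : ∀ γ ∈ Γ₁, ∃ μ c, MatRep γ (P * NB μ c * P⁻¹)) : Li Ω ≤ 2 := by
  have hmul : ∀ μ c μ' c', NB μ' c' * NB μ c = NB (μ * μ') (μ * c' + c) := by
    intro μ c μ' c'
    ext i j
    fin_cases i <;> fin_cases j <;> simp [NB, Matrix.mul_apply, Fin.sum_univ_three] <;> ring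
  have hone : NB 1 0 = 1 := by
    ext i j
    fin_cases i <;> fin_cases j <;> simp [NB]
  have hdet : ∀ μ c, (NB μ c).det = μ := by
    intro μ c
    simp [NB, Matrix.det_fin_three]
  have hcont : ∀ μ, Continuous (NB μ) := by
    intro μ
    refine continuous_matrix fun i j => ?_
    fin_cases i <;> fin_cases j <;> simp [NB] <;> fun_prop
  rcases group_dichotomy Γ hΓ Γ₁ hle P hP NB (Or.inr hmul) hone (fun μ c => by simp [NB]) hdet
    (fun μ c μ' c' h => ⟨congrFun (congrFun h 0) 0, congrFun (congrFun h 1) 0⟩) hcont hrep with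
    ⟨h1, h2⟩ | ⟨p, h⟩
  · exact li_le_two_transB Γ hΓ Γ₁ hle hfi Ω hΩ P hP hinf h1
  · have hQ : IsUnit (!![1, 0, 0; -p, 1, 0; 0, 0, 1] : Mat3).det := by
      simp [Matrix.det_fin_three]
    refine li_le_two_diag Γ hΓ Γ₁ hle hfi Ω hΩ (P * !![1, 0, 0; -p, 1, 0; 0, 0, 1])
      (by rw [Matrix.det_mul]; exact hP.mul hQ) hinf fun γ hγ => ?_
    obtain ⟨μ, hμ⟩ := h γ hγ
    refine ⟨μ, ?_⟩
    rw [← conj_change hQ (N := NB μ ((1 - μ) * p))]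
    · exact hμ
    · ext i j
      fin_cases i <;> fin_cases j <;> simp [NA, NB, Matrix.mul_apply, Fin.sum_univ_three]
      ring

/-! ### Fixed points and fixed lines in coordinates -/

lemma line_functional {ℓ : Set P2} (h : IsLine ℓ) :
    ∃ φ : V3 →ₗ[ℂ] ℂ, ∀ v hv, Projectivization.mk ℂ v hv ∈ ℓ ↔ φ v = 0 := by
  obtain ⟨W, hW, rfl⟩ := h
  have hlt : W < ⊤ := by
    rw [lt_top_iff_ne_top]
    rintro rfl
    rw [finrank_top, finrank_V3] at hW
    omega
  obtain ⟨φ, hφ, hle⟩ := Submodule.exists_le_ker_of_lt_top W hlt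
  have hWφ : W = LinearMap.ker φ := by
    refine Submodule.eq_of_le_of_finrank_le hle ?_
    rw [hW]
    refine finrank_lt_of_ne_top fun h => hφ ?_
    exact LinearMap.ker_eq_top.mp h
  refine ⟨φ, fun v hv => ?_⟩
  rw [Set.mem_ofPred_eq, mk_submodule_le, hWφ, LinearMap.mem_ker]

lemma MatRep.functional_eigen {γ : PSL3} {M : Mat3} (h : MatRep γ M) {ℓ : Set P2}
    (hℓ : pact γ '' ℓ = ℓ) {φ : V3 →ₗ[ℂ] ℂ}
    (hφ : ∀ v hv, Projectivization.mk ℂ v hv ∈ ℓ ↔ φ v = 0) {u : V3} (hu : φ u = 1) :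
    ∀ x, φ (M *ᵥ x) = φ (M *ᵥ u) * φ x := by
  have hker : ∀ x, φ x = 0 → φ (M *ᵥ x) = 0 := by
    intro x hx
    by_cases hx0 : x = 0
    · rw [hx0, Matrix.mulVec_zero, map_zero]
    · have h1 : pact γ (Projectivization.mk ℂ x hx0) ∈ ℓ := by
        rw [← hℓ]
        exact ⟨_, (hφ x hx0).mpr hx, rfl⟩
      rw [h.pact_mk] at h1
      exact (hφ _ _).mp h1
  intro x
  have := hker (x - φ x • u) (by rw [map_sub, map_smul, hu, smul_eq_mul, mul_one, sub_self])
  rw [Matrix.mulVec_sub, Matrix.mulVec_smul, map_sub, map_smul, smul_eq_mul] at this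
  linear_combination this

lemma MatRep.point_eigen {γ : PSL3} {M : Mat3} (h : MatRep γ M) {v : V3} (hv : v ≠ 0)
    (hfix : pact γ (Projectivization.mk ℂ v hv) = Projectivization.mk ℂ v hv) :
    ∃ α : ℂ, α ≠ 0 ∧ M *ᵥ v = α • v := by
  rw [h.pact_mk, Projectivization.mk_eq_mk_iff'] at hfix
  obtain ⟨α, hα⟩ := hfix
  refine ⟨α, ?_, hα.symm⟩
  rintro rfl
  rw [zero_smul] at hα
  exact h.mulVec_ne hv hα.symm

/-- The matrix with columns `a`, `b`, `c`. -/
def colsMat (a b c : V3) : Mat3 := Matrix.of fun i => ![a i, b i, c i]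

lemma colsMat_mulVec (a b c y : V3) : colsMat a b c *ᵥ y = y 0 • a + y 1 • b + y 2 • c := by
  ext i
  simp [colsMat, Matrix.mulVec, dotProduct, Fin.sum_univ_three]
  ring

lemma isUnit_det_colsMat {a b c : V3}
    (h : ∀ r s t : ℂ, r • a + s • b + t • c = 0 → r = 0 ∧ s = 0 ∧ t = 0) :
    IsUnit (colsMat a b c).det := by
  rw [← Matrix.isUnit_iff_isUnit_det, ← Matrix.mulVec_injective_iff_isUnit]
  intro x y hxy
  have h0 : colsMat a b c *ᵥ (x - y) = 0 := by
    rw [Matrix.mulVec_sub]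
    exact sub_eq_zero.mpr hxy
  rw [colsMat_mulVec] at h0
  obtain ⟨h1, h2, h3⟩ := h _ _ _ h0
  rw [← sub_eq_zero]
  ext i
  fin_cases i
  · exact h1
  · exact h2
  · exact h3

lemma exists_cols_coeff {P : Mat3} (hP : IsUnit P.det) (x : V3) : ∃ y, P *ᵥ y = x :=
  ⟨P⁻¹ *ᵥ x, by rw [Matrix.mulVec_mulVec, Matrix.mul_nonsing_inv P hP, Matrix.one_mulVec]⟩

lemma eq_conj_of_mulVec {P M N : Mat3} (hP : IsUnit P.det)
    (h : ∀ y, M *ᵥ (P *ᵥ y) = P *ᵥ (N *ᵥ y)) : M = P * N * P⁻¹ := by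
  have h1 : M * P = P * N := by
    refine Matrix.ext_of_mulVec_single fun i => ?_
    rw [← Matrix.mulVec_mulVec, h, Matrix.mulVec_mulVec]
  rw [← h1, Matrix.mul_assoc, Matrix.mul_nonsing_inv P hP, Matrix.mul_one]

lemma exists_normalised {p : P2} {φ : V3 →ₗ[ℂ] ℂ} {ℓ : Set P2}
    (hφ : ∀ v hv, Projectivization.mk ℂ v hv ∈ ℓ ↔ φ v = 0) (hp : p ∉ ℓ) :
    ∃ v, ∃ hv : v ≠ 0, p = Projectivization.mk ℂ v hv ∧ φ v = 1 := by
  induction p using Projectivization.ind with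
  | h u hu =>
    rw [hφ] at hp
    refine ⟨(φ u)⁻¹ • u, smul_ne_zero (inv_ne_zero hp) hu, ?_, ?_⟩
    · rw [Projectivization.mk_eq_mk_iff']
      exact ⟨φ u, by rw [smul_smul, mul_inv_cancel₀ hp, one_smul]⟩
    · rw [map_smul, smul_eq_mul, inv_mul_cancel₀ hp]

/-- A group fixing a line and two points off it has normal form `NB`: the eigenvalues at
both points equal that of the functional defining the line, so the line joining the points is fixed
pointwise. -/
lemma li_le_two_of_two_points (Γ : Subgroup PSL3) (hΓ : DiscreteTopology ↥Γ)
    (Γ₁ : Subgroup PSL3) (hle : Γ₁ ≤ Γ) (hfi : Γ₁.relIndex Γ ≠ 0)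
    (Ω : Set P2) (hΩ : Ω = eqSet Γ ∨ Ω = kulkarniRegion Γ ∨ MaxDisc Γ Ω)
    (hinf : (Γ₁ : Set PSL3).Infinite)
    {ℓ : Set P2} (hℓ : IsLine ℓ) {p q : P2} (hpq : p ≠ q) (hp : p ∉ ℓ) (hq : q ∉ ℓ)
    (hfix : ∀ γ ∈ Γ₁, pact γ '' ℓ = ℓ ∧ pact γ p = p ∧ pact γ q = q) : Li Ω ≤ 2 := by
  obtain ⟨φ, hφ⟩ := line_functional hℓ
  obtain ⟨v, hv0, rfl, hv⟩ := exists_normalised hφ hp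
  obtain ⟨w, hw0, rfl, hw⟩ := exists_normalised hφ hq
  set a := v - w with ha
  have ha0 : a ≠ 0 := by
    intro h
    have : v = w := sub_eq_zero.mp h
    subst this
    exact hpq rfl
  have hφa : φ a = 0 := by rw [ha, map_sub, hv, hw, sub_self]
  obtain ⟨c₀, hc₀⟩ : ∃ c₀, c₀ ∉ Submodule.span ℂ {a, v} := by
    by_contra! hall
    have htop : Submodule.span ℂ {a, v} = ⊤ := eq_top_iff.mpr fun x _ => hall x
    have h1 : Module.finrank ℂ (Submodule.span ℂ ({a, v} : Set V3)) ≤ 2 := by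
      refine (finrank_span_le_card (R := ℂ) ({a, v} : Set V3)).trans ?_
      rw [Set.toFinset_card, ← Nat.card_eq_fintype_card]
      exact (Set.ncard_insert_le a {v}).trans (by rw [Set.ncard_singleton])
    rw [htop, finrank_top, finrank_V3] at h1
    omega
  set c := c₀ - φ c₀ • v with hc
  have hφc : φ c = 0 := by
    rw [hc, map_sub, map_smul, hv, smul_eq_mul, mul_one, sub_self]
  have hcols : ∀ r s t : ℂ, r • c + s • a + t • v = 0 → r = 0 ∧ s = 0 ∧ t = 0 := by
    intro r s t h
    have ht : t = 0 := by
      have := congrArg φ h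
      simpa [hφc, hφa, hv] using this
    subst ht
    have hr : r = 0 := by
      by_contra hr
      refine hc₀ (Submodule.mem_span_pair.mpr ⟨-(r⁻¹ * s), φ c₀, ?_⟩)
      have h2 : c = -(r⁻¹ * s) • a := by
        have h3 : r • c = -(s • a) := by
          rw [zero_smul, add_zero] at h
          exact eq_neg_of_add_eq_zero_left h
        rw [← one_smul ℂ c, ← inv_mul_cancel₀ hr, ← smul_smul, h3, smul_neg, smul_smul, neg_smul]
      rw [← h2, hc, sub_add_cancel]
    subst hr
    simpa [ha0] using h
  have hP := isUnit_det_colsMat hcols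
  refine li_le_two_B Γ hΓ Γ₁ hle hfi Ω hΩ (colsMat c a v) hP hinf fun γ hγ => ?_
  obtain ⟨h1, h2, h3⟩ := hfix γ hγ
  obtain ⟨M, hM⟩ := exists_rep γ
  obtain ⟨α, hα0, hα⟩ := hM.point_eigen hv0 h2
  obtain ⟨β, hβ0, hβ⟩ := hM.point_eigen hw0 h3
  have hκ := hM.functional_eigen h1 hφ hv
  rw [hα, map_smul, hv, smul_eq_mul, mul_one] at hκ
  have hαβ : β = α := by
    have := hκ w
    rwa [hβ, map_smul, hw, smul_eq_mul, mul_one, mul_one] at this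
  subst hαβ
  have hMa : M *ᵥ a = β • a := by
    rw [ha, Matrix.mulVec_sub, hα, hβ, smul_sub]
  obtain ⟨y, hy⟩ := exists_cols_coeff hP (β⁻¹ • (M *ᵥ c))
  rw [colsMat_mulVec] at hy
  have hy2 : y 2 = 0 := by
    have := congrArg φ hy
    simpa [hφc, hφa, hv, hκ] using this
  rw [hy2, zero_smul, add_zero] at hy
  refine ⟨y 0, y 1, ?_⟩
  rw [← eq_conj_of_mulVec (M := β⁻¹ • M) hP]
  · exact hM.smul (inv_ne_zero hβ0)
  · intro x
    rw [colsMat_mulVec, colsMat_mulVec, Matrix.smul_mulVec, Matrix.mulVec_add, Matrix.mulVec_add,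
      Matrix.mulVec_smul, Matrix.mulVec_smul, Matrix.mulVec_smul, hMa, hα, smul_add, smul_add,
      smul_comm β⁻¹ (x 0), ← hy, smul_comm β⁻¹ (x 1), smul_comm β⁻¹ (x 2), smul_smul β⁻¹,
      smul_smul β⁻¹, inv_mul_cancel₀ hβ0, one_smul, one_smul]
    simp [NB, vecHead, vecTail]
    module

/-- A group fixing a point and two lines missing it has normal form `NA`. -/
lemma li_le_two_of_two_lines (Γ : Subgroup PSL3) (hΓ : DiscreteTopology ↥Γ)
    (Γ₁ : Subgroup PSL3) (hle : Γ₁ ≤ Γ) (hfi : Γ₁.relIndex Γ ≠ 0)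
    (Ω : Set P2) (hΩ : Ω = eqSet Γ ∨ Ω = kulkarniRegion Γ ∨ MaxDisc Γ Ω)
    (hinf : (Γ₁ : Set PSL3).Infinite)
    {p : P2} {m₁ m₂ : Set P2} (hm₁ : IsLine m₁) (hm₂ : IsLine m₂) (hne : m₁ ≠ m₂)
    (hp₁ : p ∉ m₁) (hp₂ : p ∉ m₂)
    (hfix : ∀ γ ∈ Γ₁, pact γ p = p ∧ pact γ '' m₁ = m₁ ∧ pact γ '' m₂ = m₂) : Li Ω ≤ 2 := by
  obtain ⟨φ, hφ⟩ := line_functional hm₁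
  obtain ⟨v, hv0, rfl, hv⟩ := exists_normalised hφ hp₁
  obtain ⟨ψ, hψ, hψv⟩ : ∃ ψ : V3 →ₗ[ℂ] ℂ,
      (∀ v hv, Projectivization.mk ℂ v hv ∈ m₂ ↔ ψ v = 0) ∧ ψ v = 1 := by
    obtain ⟨ψ, hψ⟩ := line_functional hm₂
    have h0 : ψ v ≠ 0 := fun h => hp₂ ((hψ v hv0).mpr h)
    refine ⟨(ψ v)⁻¹ • ψ, fun x hx => ?_, ?_⟩
    · rw [hψ x hx]
      simp [h0]
    · simp [h0]
  obtain ⟨w, hw1, hw2⟩ : ∃ w, φ w = 1 ∧ ψ w = 0 := by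
    have hsub : φ - ψ ≠ 0 := by
      intro h
      have : φ = ψ := sub_eq_zero.mp h
      subst this
      refine hne (Set.ext fun x => ?_)
      induction x using Projectivization.ind with
      | h x hx => rw [hφ, hψ]
    obtain ⟨u, hu⟩ : ∃ u, (φ - ψ) u ≠ 0 := by
      by_contra! h
      exact hsub (LinearMap.ext h)
    rw [LinearMap.sub_apply] at hu
    refine ⟨(φ u - ψ u)⁻¹ • (u - ψ u • v), ?_, ?_⟩
    · rw [map_smul, map_sub, map_smul, hv, smul_eq_mul, smul_eq_mul, mul_one, inv_mul_cancel₀ hu]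
    · rw [map_smul, map_sub, map_smul, hψv, smul_eq_mul, smul_eq_mul, mul_one, sub_self, mul_zero]
  obtain ⟨q, hq0, hq1, hq2⟩ : ∃ q, q ≠ 0 ∧ φ q = 0 ∧ ψ q = 0 := by
    have hker : LinearMap.ker (φ.prod ψ) ≠ ⊥ := by
      refine LinearMap.ker_ne_bot_of_finrank_lt ?_
      rw [finrank_V3, Module.finrank_prod, Module.finrank_self]
      norm_num
    obtain ⟨q, hq, hq0⟩ := Submodule.exists_mem_ne_zero_of_ne_bot hker
    rw [LinearMap.mem_ker] at hq
    exact ⟨q, hq0, congrArg Prod.fst hq, congrArg Prod.snd hq⟩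
  have hcols : ∀ r s t : ℂ, r • q + s • w + t • v = 0 → r = 0 ∧ s = 0 ∧ t = 0 := by
    intro r s t h
    have ht : t = 0 := by
      have := congrArg ψ h
      simpa [hq2, hw2, hψv] using this
    subst ht
    have hs : s = 0 := by
      have := congrArg φ h
      simpa [hq1, hw1, hv] using this
    subst hs
    simpa [hq0] using h
  have hP := isUnit_det_colsMat hcols
  refine li_le_two_A Γ hΓ Γ₁ hle hfi Ω hΩ (colsMat q w v) hP hinf fun γ hγ => ?_
  obtain ⟨h1, h2, h3⟩ := hfix γ hγ
  obtain ⟨M, hM⟩ := exists_rep γ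
  obtain ⟨α, hα0, hα⟩ := hM.point_eigen hv0 h1
  have hκ := hM.functional_eigen h2 hφ hv
  have hκ' := hM.functional_eigen h3 hψ hψv
  rw [hα, map_smul, hv, smul_eq_mul, mul_one] at hκ
  rw [hα, map_smul, hψv, smul_eq_mul, mul_one] at hκ'
  obtain ⟨y, hy⟩ := exists_cols_coeff hP (α⁻¹ • (M *ᵥ q))
  obtain ⟨z, hz⟩ := exists_cols_coeff hP (α⁻¹ • (M *ᵥ w))
  rw [colsMat_mulVec] at hy hz
  have hy2 : y 2 = 0 := by
    have := congrArg ψ hy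
    simpa [hq2, hw2, hψv, hκ'] using this
  have hy1 : y 1 = 0 := by
    have := congrArg φ hy
    simpa [hq1, hw1, hv, hκ, hy2] using this
  have hz2 : z 2 = 0 := by
    have := congrArg ψ hz
    simpa [hq2, hw2, hψv, hκ'] using this
  have hz1 : z 1 = 1 := by
    have := congrArg φ hz
    simpa [hq1, hw1, hv, hκ, hz2, hα0] using this
  rw [hy2, hy1, zero_smul, zero_smul, add_zero, add_zero] at hy
  rw [hz2, hz1, zero_smul, one_smul, add_zero] at hz
  refine ⟨y 0, z 0, ?_⟩
  rw [← eq_conj_of_mulVec (M := α⁻¹ • M) hP]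
  · exact hM.smul (inv_ne_zero hα0)
  · intro x
    rw [colsMat_mulVec, colsMat_mulVec, Matrix.smul_mulVec, Matrix.mulVec_add, Matrix.mulVec_add,
      Matrix.mulVec_smul, Matrix.mulVec_smul, Matrix.mulVec_smul, hα, smul_add, smul_add,
      smul_comm α⁻¹ (x 0), ← hy, smul_comm α⁻¹ (x 1), ← hz, smul_comm α⁻¹ (x 2), smul_smul α⁻¹,
      inv_mul_cancel₀ hα0, one_smul]
    simp [NA, vecHead, vecTail]
    module

/-! ### Finite orbits -/

lemma relIndex_stabilizer_ne_zero {X : Type*} [MulAction PSL3 X] (Γ : Subgroup PSL3) (x : X)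
    (h : {y : X | ∃ γ ∈ Γ, y = γ • x}.Finite) : (MulAction.stabilizer PSL3 x).relIndex Γ ≠ 0 := by
  have h1 : (MulAction.stabilizer PSL3 x).subgroupOf Γ = MulAction.stabilizer Γ x := by
    ext γ
    simp only [Subgroup.mem_subgroupOf, MulAction.mem_stabilizer_iff]
    rfl
  have h2 : MulAction.orbit Γ x ⊆ {y : X | ∃ γ ∈ Γ, y = γ • x} := by
    rintro _ ⟨γ, rfl⟩
    exact ⟨γ, γ.2, rfl⟩
  rw [Subgroup.relIndex, h1, MulAction.index_stabilizer]
  exact ((Set.ncard_pos (h.subset h2)).mpr (MulAction.nonempty_orbit x)).ne'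

lemma pact_injective (γ : PSL3) : Function.Injective (pact γ) := (actHom γ).injective

section Pointwise

open scoped Pointwise

/-- A finite index subgroup of `Γ` fixing a point with finite orbit. -/
lemma exists_fix_point (Γ : Subgroup PSL3) (p : P2) (h : {y | ∃ γ ∈ Γ, y = pact γ p}.Finite) :
    ∃ H : Subgroup PSL3, H.relIndex Γ ≠ 0 ∧ ∀ γ ∈ H, pact γ p = p :=
  ⟨MulAction.stabilizer PSL3 p, relIndex_stabilizer_ne_zero Γ p h, fun _ hγ => hγ⟩

/-- A finite index subgroup of `Γ` stabilising a set with finite orbit. -/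
lemma exists_fix_set (Γ : Subgroup PSL3) (ℓ : Set P2)
    (h : {s | ∃ γ ∈ Γ, s = pact γ '' ℓ}.Finite) :
    ∃ H : Subgroup PSL3, H.relIndex Γ ≠ 0 ∧ ∀ γ ∈ H, pact γ '' ℓ = ℓ :=
  ⟨MulAction.stabilizer PSL3 ℓ, relIndex_stabilizer_ne_zero Γ ℓ h, fun _ hγ => hγ⟩

end Pointwise

lemma infinite_of_relIndex {Γ H : Subgroup PSL3} (hinf : Infinite Γ) (h : H.relIndex Γ ≠ 0) :
    ((H ⊓ Γ : Subgroup PSL3) : Set PSL3).Infinite := by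
  intro hfin
  rw [← Subgroup.inf_relIndex_right] at h
  obtain ⟨F, hF, -, hcos⟩ := exists_coset_reps Γ (H ⊓ Γ) h
  refine Set.infinite_coe_iff.mp hinf ((hF.mul hfin).subset ?_)
  intro γ hγ
  obtain ⟨f, hf, g, hg, rfl⟩ := hcos γ hγ
  exact Set.mul_mem_mul hf hg

lemma linesIn_invariant (Γ : Subgroup PSL3) (Ω : Set P2)
    (hΩ : Ω = eqSet Γ ∨ Ω = kulkarniRegion Γ ∨ MaxDisc Γ Ω) {γ : PSL3} (hγ : γ ∈ Γ)
    {m : Set P2} (hm : m ∈ linesIn Ωᶜ) : pact γ '' m ∈ linesIn Ωᶜ := by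
  refine ⟨isLine_image hm.1 γ, ?_⟩
  rintro _ ⟨x, hx, rfl⟩
  exact compl_invariant Γ Ω hΩ hγ (hm.2 hx)

lemma manyLines_invariant (Γ : Subgroup PSL3) (Ω : Set P2)
    (hΩ : Ω = eqSet Γ ∨ Ω = kulkarniRegion Γ ∨ MaxDisc Γ Ω) {γ : PSL3} (hγ : γ ∈ Γ)
    {v : P2} (hv : v ∈ manyLines Ω) : pact γ v ∈ manyLines Ω := by
  refine Set.Infinite.mono ?_
    (Set.Infinite.image (f := fun m => pact γ '' m) (pact_injective γ).image_injective.injOn hv)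
  rintro _ ⟨m, ⟨hm, hvm⟩, rfl⟩
  exact ⟨linesIn_invariant Γ Ω hΩ hγ hm, v, hvm, rfl⟩

lemma avoiding_invariant (Γ : Subgroup PSL3) (Ω : Set P2)
    (hΩ : Ω = eqSet Γ ∨ Ω = kulkarniRegion Γ ∨ MaxDisc Γ Ω) {γ : PSL3} (hγ : γ ∈ Γ)
    {m : Set P2} (hm : m ∈ {m ∈ linesIn Ωᶜ | ∀ v ∈ manyLines Ω, v ∉ m}) :
    pact γ '' m ∈ {m ∈ linesIn Ωᶜ | ∀ v ∈ manyLines Ω, v ∉ m} := by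
  refine ⟨linesIn_invariant Γ Ω hΩ hγ hm.1, ?_⟩
  rintro _ hv ⟨x, hx, rfl⟩
  have := manyLines_invariant Γ Ω hΩ (Γ.inv_mem hγ) hv
  rw [pact_inv_pact] at this
  exact hm.2 x this hx

/-- At most two lines of a family in general position pass through `v`, so among four lines two
avoid it. -/
lemma exists_two_lines_avoiding {L : Set (Set P2)} (hL : InGenPos L) (h4 : 4 ≤ L.encard) (v : P2) :
    ∃ m₁ ∈ L, ∃ m₂ ∈ L, m₁ ≠ m₂ ∧ v ∉ m₁ ∧ v ∉ m₂ := by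
  have h2 : (L ∩ {m | v ∈ m}).encard ≤ 2 := by
    by_cases h : 1 < (L ∩ {m | v ∈ m}).encard
    · obtain ⟨a, b, ha, hb, hab⟩ := Set.one_lt_encard_iff.mp h
      have hsub : L ∩ {m | v ∈ m} ⊆ {a, b} := by
        intro m hm
        rcases hL v a ha.1 b hb.1 m hm.1 ha.2 hb.2 hm.2 with h | h | h
        · exact (hab h).elim
        · exact Or.inl h.symm
        · exact Or.inr h.symm
      refine (Set.encard_le_encard hsub).trans ((Set.encard_insert_le _ _).trans ?_)
      rw [Set.encard_singleton]
      norm_num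
    · exact (not_lt.mp h).trans (by norm_num)
  have h3 : 1 < (L \ {m | v ∈ m}).encard := by
    by_contra h
    rw [not_lt] at h
    have h5 := Set.encard_sdiff_add_encard_inter L {m | v ∈ m}
    have h6 : L.encard ≤ 1 + 2 := h5 ▸ add_le_add h h2
    exact absurd (h4.trans h6) (by norm_num)
  obtain ⟨a, b, ha, hb, hab⟩ := Set.one_lt_encard_iff.mp h3
  exact ⟨a, ha.1, b, hb.1, hab, ha.2, hb.2⟩

theorem infinite_orbit_of_line_avoiding_vertices
    (Γ : Subgroup PSL3) (hΓ : DiscreteTopology ↥Γ) (Ω : Set P2)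
    (hΩ : Ω = eqSet Γ ∨ Ω = kulkarniRegion Γ ∨ MaxDisc Γ Ω)
    (h4 : 4 ≤ LiG Ω) (hfin : LiG Ω ≠ ⊤)
    (L : Set (Set P2)) (hL : L ∈ genFamilies Ω) (hcard : L.encard = LiG Ω) :
    ∀ ℓ : Set P2, IsLine ℓ → (∀ v : P2, IsVertex Ω L v → v ∉ ℓ) →
      {s : Set P2 | ∃ γ ∈ Γ, s = pact γ '' ℓ}.Infinite := by
  intro ℓ hℓ hvert horb
  have hLf : L.Finite := Set.encard_ne_top_iff.mp (hcard ▸ hfin)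
  have hL4 : 4 ≤ L.encard := hcard ▸ h4
  -- at least four lines lie in the complement of `Ω`
  have hLi : ¬ Li Ω ≤ 2 := by
    intro h
    have h1 : L.encard ≤ 2 := (Set.encard_le_encard fun m hm => hL.1 m hm).trans h
    exact absurd (hL4.trans h1) (by norm_num)
  have hΓinf : Infinite Γ := by
    by_contra h
    exact hLi (li_le_two_of_finite Γ hΓ (not_infinite_iff_finite.mp h) Ω hΩ)
  have hmany : (manyLines Ω).Finite :=
    (crossings_finite hLf).subset (manyLines_subset h4 hfin hL hcard)
  have hpt : ∀ v ∈ manyLines Ω, {y | ∃ γ ∈ Γ, y = pact γ v}.Finite := by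
    intro v hv
    refine hmany.subset ?_
    rintro _ ⟨γ, hγ, rfl⟩
    exact manyLines_invariant Γ Ω hΩ hγ hv
  have havoid := finite_lines_avoiding h4 hfin hL hcard
  have hln : ∀ m ∈ {m ∈ linesIn Ωᶜ | ∀ v ∈ manyLines Ω, v ∉ m},
      {s | ∃ γ ∈ Γ, s = pact γ '' m}.Finite := by
    intro m hm
    refine havoid.subset ?_
    rintro _ ⟨γ, hγ, rfl⟩
    exact avoiding_invariant Γ Ω hΩ hγ hm
  by_cases htwo : ∃ v ∈ manyLines Ω, ∃ w ∈ manyLines Ω, v ≠ w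
  · obtain ⟨v, hv, w, hw, hvw⟩ := htwo
    obtain ⟨H₁, hi₁, hf₁⟩ := exists_fix_set Γ ℓ horb
    obtain ⟨H₂, hi₂, hf₂⟩ := exists_fix_point Γ v (hpt v hv)
    obtain ⟨H₃, hi₃, hf₃⟩ := exists_fix_point Γ w (hpt w hw)
    have hi := Subgroup.relIndex_inf_ne_zero hi₁ (Subgroup.relIndex_inf_ne_zero hi₂ hi₃)
    refine hLi (li_le_two_of_two_points Γ hΓ (H₁ ⊓ (H₂ ⊓ H₃) ⊓ Γ) inf_le_right ?_ Ω hΩ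
      (infinite_of_relIndex hΓinf hi) hℓ hvw
      (hvert v (isVertex_of_manyLines h4 hfin hL hcard hv))
      (hvert w (isVertex_of_manyLines h4 hfin hL hcard hw)) ?_)
    · rwa [Subgroup.inf_relIndex_right]
    · rintro γ ⟨⟨h1, h2, h3⟩, -⟩
      exact ⟨hf₁ γ h1, hf₂ γ h2, hf₃ γ h3⟩
  · push Not at htwo
    obtain ⟨v, hvorb, hvonly⟩ : ∃ v, {y | ∃ γ ∈ Γ, y = pact γ v}.Finite ∧
        ∀ w ∈ manyLines Ω, w = v := by
      by_cases hne : (manyLines Ω).Nonempty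
      · obtain ⟨v, hv⟩ := hne
        exact ⟨v, hpt v hv, fun w hw => htwo w hw v hv⟩
      · rw [Set.not_nonempty_iff_eq_empty] at hne
        obtain ⟨a, b, ha, hb, hab⟩ := Set.one_lt_encard_iff.mp
          (lt_of_lt_of_le (by norm_num : (1 : ℕ∞) < 4) hL4)
        obtain ⟨v, hv⟩ := line_inter (hL.1 a ha).1 (hL.1 b hb).1 hab
        -- no point lies on infinitely many lines, so `Γ` permutes a finite set of lines
        refine ⟨v, (crossings_finite havoid).subset ?_, fun w hw => ?_⟩
        · rintro _ ⟨γ, hγ, rfl⟩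
          refine ⟨pact γ '' a, avoiding_invariant Γ Ω hΩ hγ ⟨hL.1 a ha, by simp [hne]⟩,
            pact γ '' b, avoiding_invariant Γ Ω hΩ hγ ⟨hL.1 b hb, by simp [hne]⟩,
            fun h => hab ((pact_injective γ).image_injective h), ?_⟩
          rw [← Set.image_inter (pact_injective γ), hv, Set.image_singleton]
        · rw [hne] at hw
          exact hw.elim
    obtain ⟨m₁, hm₁, m₂, hm₂, hne, hv₁, hv₂⟩ := exists_two_lines_avoiding hL.2 hL4 v
    obtain ⟨H₁, hi₁, hf₁⟩ := exists_fix_point Γ v hvorb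
    obtain ⟨H₂, hi₂, hf₂⟩ := exists_fix_set Γ m₁
      (hln m₁ ⟨hL.1 m₁ hm₁, fun w hw => hvonly w hw ▸ hv₁⟩)
    obtain ⟨H₃, hi₃, hf₃⟩ := exists_fix_set Γ m₂
      (hln m₂ ⟨hL.1 m₂ hm₂, fun w hw => hvonly w hw ▸ hv₂⟩)
    have hi := Subgroup.relIndex_inf_ne_zero hi₁ (Subgroup.relIndex_inf_ne_zero hi₂ hi₃)
    refine hLi (li_le_two_of_two_lines Γ hΓ (H₁ ⊓ (H₂ ⊓ H₃) ⊓ Γ) inf_le_right ?_ Ω hΩ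
      (infinite_of_relIndex hΓinf hi) (hL.1 m₁ hm₁).1 (hL.1 m₂ hm₂).1 hne hv₁ hv₂ ?_)
    · rwa [Subgroup.inf_relIndex_right]
    · rintro γ ⟨⟨h1, h2, h3⟩, -⟩
      exact ⟨hf₁ γ h1, hf₂ γ h2, hf₃ γ h3⟩
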